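/- Let $(\phi_k)$ be a wavelet-type system and $(p_n)$ a sequence of $L^2$-normalized non-overlapping $\Phi$-polynomials, i.e. $p_n = \sum_{j\in G_n} c_j \phi_j$ with $\|p_n\|_{L^2} = 1$ and the finite sets $G_n \subset \mathbb{N}$ pairwise disjoint. If the coefficients $(a_n)$ satisfy $\sum_{n=1}^\infty a_n^2 \log(n+1) < \infty$, then the series $\sum_{n=1}^\infty a_n p_n(x)$ converges almost everywhere on $[0,1]$. -/

import Mathlib

open MeasureTheory Set

noncomputable section

/-- The decay profile `ξ(x) = (1+|x|)^{-(1+δ)}`. -/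
def xi (δ x : ℝ) : ℝ := (1 + |x|) ^ (-(1 + δ))

/-- The center `t_k = (2j-1)/2^m` for `k = 2^{m-1} + j`, `1 ≤ j ≤ 2^{m-1}`. -/
def tpt (m k : ℕ) : ℝ := (2 * ((k : ℝ) - 2 ^ (m - 1)) - 1) / 2 ^ m

/-- Decay bound of a wavelet-type system: for `2^{m-1} < k ≤ 2^m`,
`|φ_k(x)| ≤ c 2^{m/2} ξ(2^m (x - t_k))`. -/
def WaveletDecay (δ c : ℝ) (φ : ℕ → ℝ → ℝ) : Prop :=
  ∀ m : ℕ, 1 ≤ m → ∀ k ∈ Finset.Ioc (2 ^ (m - 1)) (2 ^ m), ∀ x ∈ Set.Icc (0:ℝ) 1,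
    |φ k x| ≤ c * 2 ^ ((m : ℝ) / 2) * xi δ (2 ^ m * (x - tpt m k))

/-- Hölder bound of a wavelet-type system: for `2^{m-1} < k ≤ 2^m` and
`|t - t'| ≤ 2^{-m}`, `|φ_k(t) - φ_k(t')| ≤ c 2^{m/2} (2^m |t-t'|)^α ξ(2^m (t - t_k))`. -/
def WaveletHolder (δ α c : ℝ) (φ : ℕ → ℝ → ℝ) : Prop :=
  ∀ m : ℕ, 1 ≤ m → ∀ k ∈ Finset.Ioc (2 ^ (m - 1)) (2 ^ m),
    ∀ t ∈ Set.Icc (0:ℝ) 1, ∀ t' ∈ Set.Icc (0:ℝ) 1, |t - t'| ≤ ((2 : ℝ) ^ m)⁻¹ →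
      |φ k t - φ k t'| ≤
        c * 2 ^ ((m : ℝ) / 2) * (2 ^ m * |t - t'|) ^ α * xi δ (2 ^ m * (t - tpt m k))

/-- A wavelet-type system: measurable, orthonormal on `(0,1)`, mean zero, with the
decay and Hölder bounds. -/
def IsWaveletSystem (δ α c : ℝ) (φ : ℕ → ℝ → ℝ) : Prop :=
  (∀ k, Measurable (φ k)) ∧
  (∀ j k : ℕ, 1 ≤ j → 1 ≤ k →
    (∫ x in Set.Ioo (0:ℝ) 1, φ j x * φ k x) = if j = k then 1 else 0) ∧
  (∀ k : ℕ, 1 ≤ k → (∫ x in Set.Ioo (0:ℝ) 1, φ k x) = 0) ∧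
  WaveletDecay δ c φ ∧ WaveletHolder δ α c φ

theorem even_pow_symm_expansion (f d : ℝ) (r : ℕ) :
    |((f + d) ^ (2 * (r + 1)) - (f - d) ^ (2 * (r + 1))) / 2| ≤
        2 * (r + 1) * |d| * (|f| + |d|) ^ (2 * r + 1) ∧
      ((f + d) ^ (2 * (r + 1)) + (f - d) ^ (2 * (r + 1))) / 2 - f ^ (2 * (r + 1)) ≤
        2 * (r + 1) ^ 2 * d ^ 2 * (|f| + |d|) ^ (2 * r) := by
  have hf := abs_nonneg f
  have hd := abs_nonneg d
  have hfw : |f| ≤ |f| + |d| := by linarith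
  have hw0 : 0 ≤ |f| + |d| := by linarith
  induction r with
  | zero =>
    constructor
    · rw [show ((f + d) ^ (2 * (0 + 1)) - (f - d) ^ (2 * (0 + 1))) / 2 = 2 * (f * d) by ring,
        abs_mul, abs_mul, abs_of_pos (two_pos : (0 : ℝ) < 2)]
      push_cast
      nlinarith
    · push_cast
      nlinarith [sq_nonneg d]
  | succ r ih =>
    obtain ⟨ih1, ih2⟩ := ih
    set w := |f| + |d| with hw
    set X := ((f + d) ^ (2 * (r + 1)) + (f - d) ^ (2 * (r + 1))) / 2 with hX
    set Y := ((f + d) ^ (2 * (r + 1)) - (f - d) ^ (2 * (r + 1))) / 2 with hY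
    have hX' : ((f + d) ^ (2 * (r + 1 + 1)) + (f - d) ^ (2 * (r + 1 + 1))) / 2 =
        (f ^ 2 + d ^ 2) * X + 2 * f * d * Y := by rw [hX, hY]; ring
    have hY' : ((f + d) ^ (2 * (r + 1 + 1)) - (f - d) ^ (2 * (r + 1 + 1))) / 2 =
        (f ^ 2 + d ^ 2) * Y + 2 * f * d * X := by rw [hX, hY]; ring
    have hX0 : 0 ≤ X := by
      have h1 := (even_two_mul (r + 1)).pow_nonneg (f + d)
      have h2 := (even_two_mul (r + 1)).pow_nonneg (f - d)
      rw [hX]; linarith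
    have hXw : X ≤ w ^ (2 * (r + 1)) := by
      have h1 : (f + d) ^ (2 * (r + 1)) ≤ w ^ (2 * (r + 1)) := by
        rw [← (even_two_mul (r + 1)).pow_abs (f + d)]
        exact pow_le_pow_left₀ (abs_nonneg _) (abs_add_le f d) _
      have h2 : (f - d) ^ (2 * (r + 1)) ≤ w ^ (2 * (r + 1)) := by
        rw [← (even_two_mul (r + 1)).pow_abs (f - d)]
        exact pow_le_pow_left₀ (abs_nonneg _) (abs_sub f d) _
      rw [hX]; linarith
    have hfd : f ^ 2 + d ^ 2 ≤ w ^ 2 := by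
      rw [hw, ← sq_abs f, ← sq_abs d]; nlinarith
    have hf2 : f ^ 2 ≤ w ^ 2 := by nlinarith [sq_nonneg d]
    have hwp : ∀ n : ℕ, 0 ≤ w ^ n := fun n => pow_nonneg hw0 n
    rw [hX', hY']
    push_cast
    constructor
    · calc |(f ^ 2 + d ^ 2) * Y + 2 * f * d * X|
          ≤ (f ^ 2 + d ^ 2) * |Y| + 2 * |f| * |d| * X := by
            refine (abs_add_le _ _).trans (le_of_eq ?_)
            rw [abs_mul, abs_mul, abs_mul, abs_mul, abs_of_nonneg hX0,
              abs_of_nonneg (by positivity : 0 ≤ f ^ 2 + d ^ 2),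
              abs_of_pos (two_pos : (0 : ℝ) < 2)]
        _ ≤ w ^ 2 * (2 * (r + 1) * |d| * w ^ (2 * r + 1)) + 2 * w * |d| * w ^ (2 * (r + 1)) := by
            gcongr
        _ = 2 * ((r : ℝ) + 1 + 1) * |d| * w ^ (2 * (r + 1) + 1) := by ring
    · have h1 : 2 * f * d * Y ≤ 2 * w * |d| * (2 * (r + 1) * |d| * w ^ (2 * r + 1)) := by
        calc 2 * f * d * Y ≤ |2 * f * d * Y| := le_abs_self _
          _ = 2 * |f| * |d| * |Y| := by
            rw [abs_mul, abs_mul, abs_mul, abs_of_pos (two_pos : (0 : ℝ) < 2)]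
          _ ≤ _ := by gcongr
      have h2 : f ^ 2 * (X - f ^ (2 * (r + 1))) ≤
          w ^ 2 * (2 * (r + 1) ^ 2 * d ^ 2 * w ^ (2 * r)) :=
        (mul_le_mul_of_nonneg_left ih2 (sq_nonneg f)).trans
          (mul_le_mul_of_nonneg_right hf2 (by positivity))
      have h3 : d ^ 2 * X ≤ d ^ 2 * w ^ (2 * (r + 1)) :=
        mul_le_mul_of_nonneg_left hXw (sq_nonneg d)
      have h4 : 0 ≤ d ^ 2 * w ^ (2 * (r + 1)) := by positivity
      have h5 : |d| * |d| = d ^ 2 := by rw [← sq, sq_abs]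
      calc (f ^ 2 + d ^ 2) * X + 2 * f * d * Y - f ^ (2 * (r + 1 + 1))
          = f ^ 2 * (X - f ^ (2 * (r + 1))) + d ^ 2 * X + 2 * f * d * Y := by ring
        _ ≤ w ^ 2 * (2 * (r + 1) ^ 2 * d ^ 2 * w ^ (2 * r)) + d ^ 2 * w ^ (2 * (r + 1)) +
            2 * w * |d| * (2 * (r + 1) * |d| * w ^ (2 * r + 1)) := by linarith
        _ = (2 * (r + 1) ^ 2 + 1 + 4 * (r + 1)) * (d ^ 2 * w ^ (2 * (r + 1))) := by
            rw [← h5]; ring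
        _ ≤ (2 * (r + 1 + 1) ^ 2) * (d ^ 2 * w ^ (2 * (r + 1))) := by
            gcongr; nlinarith
        _ = _ := by ring

theorem even_pow_symm_le_of_sq_le {r : ℕ} {f d σ : ℝ} (hσ : 0 ≤ σ)
    (hf : f ^ 2 ≤ 4 * (r + 1) * σ) (hd : d ^ 2 ≤ σ) :
    ((f + d) ^ (2 * (r + 1)) + (f - d) ^ (2 * (r + 1))) / 2 ≤
      f ^ (2 * (r + 1)) + 2 * (r + 1) ^ 2 * (9 * (r + 1)) ^ r * d ^ 2 * σ ^ r := by
  have h := (even_pow_symm_expansion f d r).2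
  have hw : (|f| + |d|) ^ 2 ≤ 9 * (r + 1) * σ := by
    have : (|f| + |d|) ^ 2 ≤ 3 / 2 * f ^ 2 + 3 * d ^ 2 := by
      rw [← sq_abs f, ← sq_abs d]; nlinarith [sq_nonneg (|f| - 2 * |d|)]
    have hr : (0 : ℝ) ≤ r * σ := by positivity
    nlinarith
  have hw' : (|f| + |d|) ^ (2 * r) ≤ (9 * (r + 1)) ^ r * σ ^ r := by
    rw [pow_mul, ← mul_pow]
    exact pow_le_pow_left₀ (sq_nonneg _) hw r
  have : 2 * ((r : ℝ) + 1) ^ 2 * d ^ 2 * (|f| + |d|) ^ (2 * r) ≤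
      2 * (r + 1) ^ 2 * d ^ 2 * ((9 * (r + 1)) ^ r * σ ^ r) := by gcongr
  nlinarith

theorem even_pow_symm_le_of_le_sq {r : ℕ} (hr : 1 ≤ r) {f d g s : ℝ} (hs : 0 < s)
    (hd : |d| ≤ g) (hf : 4 * (r + 1) * (s + g ^ 2) < f ^ 2) :
    ((f + d) ^ (2 * (r + 1)) + (f - d) ^ (2 * (r + 1))) / 2 * s ^ r ≤
      f ^ (2 * (r + 1)) * (s + g ^ 2) ^ r := by
  set σ := s + g ^ 2 with hσdef
  have hσ : 0 < σ := by positivity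
  have hr' : (1 : ℝ) ≤ r := by exact_mod_cast hr
  have hdg : d ^ 2 ≤ g ^ 2 := by rw [← sq_abs d]; gcongr
  have hf2 : 0 < f ^ 2 := lt_trans (by positivity) hf
  have hf0 : f ≠ 0 := by rintro rfl; simp at hf2
  set ρ := d / f with hρ
  have hdρ : d = f * ρ := by rw [hρ]; field_simp
  have hρsq : ρ ^ 2 * (4 * (r + 1) * σ) ≤ g ^ 2 := by
    calc ρ ^ 2 * (4 * (r + 1) * σ) ≤ ρ ^ 2 * f ^ 2 := by gcongr
      _ = d ^ 2 := by rw [hdρ]; ring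
      _ ≤ g ^ 2 := hdg
  have hρ1 : ρ ^ 2 ≤ 1 := by
    by_contra hcon
    push Not at hcon
    have : 1 * (4 * (r + 1) * σ) < ρ ^ 2 * (4 * (r + 1) * σ) := by gcongr
    nlinarith [mul_nonneg (by linarith : (0 : ℝ) ≤ r) hσ.le]
  have habs := abs_le.1 ((sq_le_one_iff_abs_le_one ρ).1 hρ1)
  have e1 : (1 + ρ) ^ (2 * (r + 1)) ≤ Real.exp (2 * (r + 1) * ρ) := by
    have : (1 + ρ) ^ (2 * (r + 1)) ≤ Real.exp ρ ^ (2 * (r + 1)) :=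
      pow_le_pow_left₀ (by linarith) (by linarith [Real.add_one_le_exp ρ]) _
    rwa [← Real.exp_nat_mul, show ((2 * (r + 1) : ℕ) : ℝ) * ρ = 2 * (r + 1) * ρ by push_cast; ring]
      at this
  have e2 : (1 - ρ) ^ (2 * (r + 1)) ≤ Real.exp (-(2 * (r + 1) * ρ)) := by
    have : (1 - ρ) ^ (2 * (r + 1)) ≤ Real.exp (-ρ) ^ (2 * (r + 1)) :=
      pow_le_pow_left₀ (by linarith) (by linarith [Real.add_one_le_exp (-ρ)]) _
    rwa [← Real.exp_nat_mul,
      show ((2 * (r + 1) : ℕ) : ℝ) * -ρ = -(2 * (r + 1) * ρ) by push_cast; ring] at this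
  have e3 : ((1 + ρ) ^ (2 * (r + 1)) + (1 - ρ) ^ (2 * (r + 1))) / 2 ≤ Real.exp (r * (g ^ 2 / σ)) := by
    calc _ ≤ Real.cosh (2 * (r + 1) * ρ) := by rw [Real.cosh_eq]; linarith
      _ ≤ Real.exp ((2 * (r + 1) * ρ) ^ 2 / 2) := Real.cosh_le_exp_half_sq _
      _ ≤ Real.exp (r * (g ^ 2 / σ)) := by
        rw [Real.exp_le_exp, ← mul_div_assoc (r : ℝ), le_div_iff₀ hσ]
        nlinarith [sq_nonneg g, mul_le_mul_of_nonneg_left hρsq (by linarith : (0 : ℝ) ≤ (r + 1) / 2)]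
  have e4 : s ^ r ≤ σ ^ r * Real.exp (-(r * (g ^ 2 / σ))) := by
    have h1 : s ≤ σ * Real.exp (-(g ^ 2 / σ)) := by
      have := Real.add_one_le_exp (-(g ^ 2 / σ))
      calc s = σ * (-(g ^ 2 / σ) + 1) := by field_simp; rw [hσdef]; ring
        _ ≤ _ := by gcongr
    calc s ^ r ≤ (σ * Real.exp (-(g ^ 2 / σ))) ^ r := by gcongr
      _ = _ := by rw [mul_pow, ← Real.exp_nat_mul]; ring_nf
  have hfp : 0 ≤ f ^ (2 * (r + 1)) := (even_two_mul (r + 1)).pow_nonneg f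
  calc ((f + d) ^ (2 * (r + 1)) + (f - d) ^ (2 * (r + 1))) / 2 * s ^ r
      = f ^ (2 * (r + 1)) * (((1 + ρ) ^ (2 * (r + 1)) + (1 - ρ) ^ (2 * (r + 1))) / 2) * s ^ r := by
        rw [hdρ, show f + f * ρ = f * (1 + ρ) by ring, show f - f * ρ = f * (1 - ρ) by ring,
          mul_pow, mul_pow]; ring
    _ ≤ f ^ (2 * (r + 1)) * Real.exp (r * (g ^ 2 / σ)) *
        (σ ^ r * Real.exp (-(r * (g ^ 2 / σ)))) := by gcongr
    _ = f ^ (2 * (r + 1)) * σ ^ r * (Real.exp (r * (g ^ 2 / σ)) *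
        Real.exp (-(r * (g ^ 2 / σ)))) := by ring
    _ = f ^ (2 * (r + 1)) * σ ^ r := by rw [← Real.exp_add]; simp

/-- One dyadic step of the self-normalized moment inequality. -/
theorem selfNormalized_step {r : ℕ} (hr : 1 ≤ r) {f d g s : ℝ} (hs : 0 < s) (hd : |d| ≤ g) :
    ((f + d) ^ (2 * (r + 1)) + (f - d) ^ (2 * (r + 1))) / 2 / (s + g ^ 2) ^ r ≤
      f ^ (2 * (r + 1)) / s ^ r + 2 * (r + 1) ^ 2 * (9 * (r + 1)) ^ r * g ^ 2 := by
  have hσ : 0 < s + g ^ 2 := by positivity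
  have hdg : d ^ 2 ≤ g ^ 2 := by rw [← sq_abs d]; gcongr
  have hfp : 0 ≤ f ^ (2 * (r + 1)) := (even_two_mul (r + 1)).pow_nonneg f
  rcases le_or_gt (f ^ 2) (4 * (r + 1) * (s + g ^ 2)) with hf | hf
  · have h := even_pow_symm_le_of_sq_le hσ.le hf (by linarith : d ^ 2 ≤ s + g ^ 2)
    calc _ ≤ (f ^ (2 * (r + 1)) + 2 * (r + 1) ^ 2 * (9 * (r + 1)) ^ r * d ^ 2 * (s + g ^ 2) ^ r) /
          (s + g ^ 2) ^ r := by gcongr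
      _ = f ^ (2 * (r + 1)) / (s + g ^ 2) ^ r + 2 * (r + 1) ^ 2 * (9 * (r + 1)) ^ r * d ^ 2 := by
          field_simp
      _ ≤ _ := by
          gcongr
          nlinarith [sq_nonneg g]
  · have h := even_pow_symm_le_of_le_sq hr hs hd hf
    have h1 : ((f + d) ^ (2 * (r + 1)) + (f - d) ^ (2 * (r + 1))) / 2 / (s + g ^ 2) ^ r ≤
        f ^ (2 * (r + 1)) / s ^ r := by
      rw [div_le_div_iff₀ (by positivity) (by positivity)]
      exact h
    have : 0 ≤ 2 * ((r : ℝ) + 1) ^ 2 * (9 * (r + 1)) ^ r * g ^ 2 := by positivity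
    linarith

/-- Mean over the `2 ^ K` dyadic intervals of level `K`. -/
def dyadicMean (K : ℕ) (F : ℕ → ℝ) : ℝ := (∑ l ∈ Finset.range (2 ^ K), F l) / 2 ^ K

theorem sum_range_two_mul (n : ℕ) (F : ℕ → ℝ) :
    ∑ l ∈ Finset.range (2 * n), F l =
      ∑ l ∈ Finset.range n, (F (2 * l) + F (2 * l + 1)) := by
  induction n with
  | zero => simp
  | succ n ih =>
    rw [show 2 * (n + 1) = 2 * n + 1 + 1 by ring, Finset.sum_range_succ, Finset.sum_range_succ,
      Finset.sum_range_succ, ih]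
    ring

theorem dyadicMean_succ (K : ℕ) (F : ℕ → ℝ) :
    dyadicMean (K + 1) F = dyadicMean K fun l => (F (2 * l) + F (2 * l + 1)) / 2 := by
  unfold dyadicMean
  rw [pow_succ', sum_range_two_mul, ← Finset.sum_div, pow_succ', div_div]

theorem dyadicMean_mono {K : ℕ} {F H : ℕ → ℝ} (h : ∀ l < 2 ^ K, F l ≤ H l) :
    dyadicMean K F ≤ dyadicMean K H := by
  unfold dyadicMean
  gcongr with l hl
  exact h l (Finset.mem_range.1 hl)

theorem dyadicMean_add (K : ℕ) (F H : ℕ → ℝ) :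
    dyadicMean K (fun l => F l + H l) = dyadicMean K F + dyadicMean K H := by
  simp only [dyadicMean, Finset.sum_add_distrib, add_div]

theorem dyadicMean_const_mul (K : ℕ) (c : ℝ) (F : ℕ → ℝ) :
    dyadicMean K (fun l => c * F l) = c * dyadicMean K F := by
  simp only [dyadicMean, ← Finset.mul_sum, mul_div_assoc]

theorem dyadicMean_sum {ι : Type*} (K : ℕ) (s : Finset ι) (F : ι → ℕ → ℝ) :
    dyadicMean K (fun l => ∑ i ∈ s, F i l) = ∑ i ∈ s, dyadicMean K (F i) := by
  simp only [dyadicMean]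
  rw [Finset.sum_comm, Finset.sum_div]

/-- Accumulated square function of `g` started at `ε`. -/
def accSq (ε : ℝ) (g : ℕ → ℕ → ℝ) : ℕ → ℕ → ℝ
  | 0, _ => ε
  | K + 1, l => accSq ε g K (l / 2) + g K (l / 2) ^ 2

theorem accSq_pos {ε : ℝ} (hε : 0 < ε) (g : ℕ → ℕ → ℝ) (K l : ℕ) : 0 < accSq ε g K l := by
  induction K generalizing l with
  | zero => exact hε
  | succ K ih => have := ih (l / 2); rw [accSq]; positivity

theorem accSq_succ_even (ε : ℝ) (g : ℕ → ℕ → ℝ) (K l : ℕ) :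
    accSq ε g (K + 1) (2 * l) = accSq ε g K l + g K l ^ 2 := by
  rw [accSq, Nat.mul_div_cancel_left l two_pos]

theorem accSq_succ_odd (ε : ℝ) (g : ℕ → ℕ → ℝ) (K l : ℕ) :
    accSq ε g (K + 1) (2 * l + 1) = accSq ε g K l + g K l ^ 2 := by
  rw [accSq, show (2 * l + 1) / 2 = l by omega]

theorem dyadicMean_accSq (ε : ℝ) (g : ℕ → ℕ → ℝ) (K : ℕ) :
    dyadicMean K (accSq ε g K) =
      ε + ∑ k ∈ Finset.range K, dyadicMean k fun l => g k l ^ 2 := by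
  induction K with
  | zero => simp [dyadicMean, accSq]
  | succ K ih =>
    rw [dyadicMean_succ, Finset.sum_range_succ, ← add_assoc, ← ih, ← dyadicMean_add]
    congr 1
    ext l
    rw [accSq_succ_even, accSq_succ_odd]
    ring

/-- Self-normalized even moments of a dyadic martingale whose differences are dominated by `g`. -/
theorem dyadicMean_selfNormalized {r : ℕ} (hr : 1 ≤ r) {ε : ℝ} (hε : 0 < ε) {v g : ℕ → ℕ → ℝ}
    (hv0 : v 0 0 = 0) (hv : ∀ k l, l < 2 ^ k → v k l = (v (k + 1) (2 * l) + v (k + 1) (2 * l + 1)) / 2)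
    (hd : ∀ k l, l < 2 ^ k → |(v (k + 1) (2 * l) - v (k + 1) (2 * l + 1)) / 2| ≤ g k l) (K : ℕ) :
    dyadicMean K (fun l => v K l ^ (2 * (r + 1)) / accSq ε g K l ^ r) ≤
      2 * (r + 1) ^ 2 * (9 * (r + 1)) ^ r * dyadicMean K (accSq ε g K) := by
  induction K with
  | zero => simp [dyadicMean, accSq, hv0]; positivity
  | succ K ih =>
    rw [dyadicMean_succ, dyadicMean_succ K (accSq ε g (K + 1))]
    simp only [accSq_succ_even, accSq_succ_odd]
    have key : ∀ l < 2 ^ K, (v (K + 1) (2 * l) ^ (2 * (r + 1)) / (accSq ε g K l + g K l ^ 2) ^ r +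
        v (K + 1) (2 * l + 1) ^ (2 * (r + 1)) / (accSq ε g K l + g K l ^ 2) ^ r) / 2 ≤
        v K l ^ (2 * (r + 1)) / accSq ε g K l ^ r +
          2 * (r + 1) ^ 2 * (9 * (r + 1)) ^ r * g K l ^ 2 := by
      intro l hl
      have h := selfNormalized_step hr (f := v K l) (accSq_pos hε g K l) (hd K l hl)
      rw [show v K l + (v (K + 1) (2 * l) - v (K + 1) (2 * l + 1)) / 2 = v (K + 1) (2 * l) by
          rw [hv K l hl]; ring,
        show v K l - (v (K + 1) (2 * l) - v (K + 1) (2 * l + 1)) / 2 = v (K + 1) (2 * l + 1) by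
          rw [hv K l hl]; ring] at h
      refine le_trans (le_of_eq ?_) h
      ring
    refine (dyadicMean_mono key).trans ?_
    rw [dyadicMean_add, dyadicMean_const_mul]
    have : dyadicMean K (fun l => (accSq ε g K l + g K l ^ 2 + (accSq ε g K l + g K l ^ 2)) / 2) =
        dyadicMean K (accSq ε g K) + dyadicMean K (fun l => g K l ^ 2) := by
      rw [← dyadicMean_add]; congr 1; ext l; ring
    rw [this, mul_add (2 * ((r : ℝ) + 1) ^ 2 * (9 * (r + 1)) ^ r)]
    linarith

theorem sq_le_add_selfNormalized {r : ℕ} {A s v : ℝ} (hA : 0 < A) (hs : 0 < s) :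
    v ^ 2 ≤ A * s + (A ^ r)⁻¹ * (v ^ (2 * (r + 1)) / s ^ r) := by
  have h0 : 0 ≤ v ^ (2 * (r + 1)) := (even_two_mul (r + 1)).pow_nonneg v
  rcases le_or_gt (v ^ 2) (A * s) with h | h
  · have : 0 ≤ (A ^ r)⁻¹ * (v ^ (2 * (r + 1)) / s ^ r) := by positivity
    linarith
  · have h1 : (A * s) ^ r ≤ (v ^ 2) ^ r := by gcongr
    have : v ^ 2 ≤ (A ^ r)⁻¹ * (v ^ (2 * (r + 1)) / s ^ r) := by
      rw [inv_mul_eq_div, div_div, le_div_iff₀ (by positivity), mul_comm (s ^ r), ← mul_pow]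
      calc v ^ 2 * (A * s) ^ r ≤ v ^ 2 * (v ^ 2) ^ r := by gcongr
        _ = _ := by rw [← pow_mul]; ring
    have : 0 < A * s := by positivity
    linarith

/-- Maximal inequality for at most `2 ^ (r + 1)` dyadic martingales with a common majorant of
their differences. -/
theorem dyadicMean_max_sq_le {ι : Type*} {r : ℕ} (hr : 1 ≤ r) (s : Finset ι)
    (hs : s.card ≤ 2 ^ (r + 1)) {v : ι → ℕ → ℕ → ℝ} {g : ℕ → ℕ → ℝ}
    (hv0 : ∀ i ∈ s, v i 0 0 = 0)
    (hv : ∀ i ∈ s, ∀ k l, l < 2 ^ k → v i k l = (v i (k + 1) (2 * l) + v i (k + 1) (2 * l + 1)) / 2)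
    (hd : ∀ i ∈ s, ∀ k l, l < 2 ^ k →
      |(v i (k + 1) (2 * l) - v i (k + 1) (2 * l + 1)) / 2| ≤ g k l)
    (K : ℕ) {mx : ℕ → ℝ} (hmx : ∀ l < 2 ^ K, mx l = 0 ∨ ∃ i ∈ s, mx l = v i K l ^ 2) {B : ℝ}
    (hB : ∑ k ∈ Finset.range K, dyadicMean k (fun l => g k l ^ 2) ≤ B) :
    dyadicMean K mx ≤ 44 * (r + 1) * B := by
  refine le_of_forall_pos_le_add fun ε' hε' => ?_
  obtain ⟨ε, hε, hεε⟩ : ∃ ε : ℝ, 0 < ε ∧ 44 * ((r : ℝ) + 1) * ε = ε' :=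
    ⟨ε' / (44 * (r + 1)), by positivity, by field_simp⟩
  set A : ℝ := 36 * (r + 1) with hA
  have hA0 : 0 < A := by positivity
  have hM : dyadicMean K (accSq ε g K) ≤ ε + B := by rw [dyadicMean_accSq]; linarith
  have hM0 : 0 ≤ dyadicMean K (accSq ε g K) :=
    div_nonneg (Finset.sum_nonneg fun l _ => (accSq_pos hε g K l).le) (by positivity)
  have h1 : ∀ l < 2 ^ K, mx l ≤ A * accSq ε g K l +
      (A ^ r)⁻¹ * ∑ i ∈ s, v i K l ^ (2 * (r + 1)) / accSq ε g K l ^ r := by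
    intro l hl
    have hsl := accSq_pos hε g K l
    have hn : ∀ i ∈ s, 0 ≤ v i K l ^ (2 * (r + 1)) / accSq ε g K l ^ r := fun i _ =>
      div_nonneg ((even_two_mul (r + 1)).pow_nonneg _) (by positivity)
    rcases hmx l hl with h | ⟨i, hi, h⟩
    · rw [h]
      have := Finset.sum_nonneg hn
      positivity
    · rw [h]
      refine (sq_le_add_selfNormalized (r := r) hA0 hsl).trans ?_
      gcongr
      exact Finset.single_le_sum hn hi
  have h2 : ((A : ℝ) ^ r)⁻¹ * (s.card * (2 * (r + 1) ^ 2 * (9 * (r + 1)) ^ r)) ≤ 8 * (r + 1) := by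
    rw [inv_mul_le_iff₀ (by positivity), hA, show (36 : ℝ) * (r + 1) = 4 * (9 * (r + 1)) by ring,
      mul_pow (4 : ℝ)]
    have hc : (s.card : ℝ) ≤ 2 * 2 ^ r := by
      calc (s.card : ℝ) ≤ ((2 ^ (r + 1) : ℕ) : ℝ) := by exact_mod_cast hs
        _ = 2 * 2 ^ r := by push_cast; ring
    have hr2 : (r : ℝ) + 1 ≤ 2 * 2 ^ r := by
      have : r + 1 < 2 ^ (r + 1) := Nat.lt_two_pow_self
      have : ((r + 1 : ℕ) : ℝ) ≤ ((2 ^ (r + 1) : ℕ) : ℝ) := by exact_mod_cast this.le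
      push_cast at this
      linarith [pow_succ' (2 : ℝ) r]
    have h4 : (4 : ℝ) ^ r = 2 ^ r * 2 ^ r := by rw [← mul_pow]; norm_num
    calc (s.card : ℝ) * (2 * (r + 1) ^ 2 * (9 * (r + 1)) ^ r)
        ≤ (2 * 2 ^ r) * (2 * ((2 * 2 ^ r) * (r + 1)) * (9 * (r + 1)) ^ r) := by
          rw [sq]; gcongr
      _ = _ := by rw [h4]; ring
  calc dyadicMean K mx ≤ A * dyadicMean K (accSq ε g K) + (A ^ r)⁻¹ *
        ∑ i ∈ s, dyadicMean K (fun l => v i K l ^ (2 * (r + 1)) / accSq ε g K l ^ r) := by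
        refine (dyadicMean_mono h1).trans (le_of_eq ?_)
        rw [dyadicMean_add, dyadicMean_const_mul, dyadicMean_const_mul, dyadicMean_sum]
    _ ≤ A * dyadicMean K (accSq ε g K) + (A ^ r)⁻¹ *
        ∑ i ∈ s, 2 * (r + 1) ^ 2 * (9 * (r + 1)) ^ r * dyadicMean K (accSq ε g K) := by
        gcongr with i hi
        exact dyadicMean_selfNormalized hr hε (hv0 i hi) (hv i hi) (hd i hi) K
    _ = (A + (A ^ r)⁻¹ * (s.card * (2 * (r + 1) ^ 2 * (9 * (r + 1)) ^ r))) *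
        dyadicMean K (accSq ε g K) := by
        rw [Finset.sum_const, nsmul_eq_mul]; ring
    _ ≤ (A + 8 * (r + 1)) * (ε + B) := by gcongr
    _ = 44 * (r + 1) * B + ε' := by rw [← hεε, hA]; ring

theorem Summable.sum_int_sub_le {f : ℤ → ℝ} (hf : Summable f) (h0 : ∀ i, 0 ≤ f i) (n : ℤ)
    (s : Finset ℤ) : ∑ i ∈ s, f (n - i) ≤ ∑' i, f i := by
  rw [← (Equiv.subLeft n).tsum_eq f]
  exact ((Equiv.subLeft n).summable_iff.2 hf).sum_le_tsum s fun i _ => h0 _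

theorem summable_one_add_abs_int_rpow {ε : ℝ} (hε : 0 < ε) :
    Summable fun i : ℤ => (1 + |(i : ℝ)|) ^ (-(1 + ε)) := by
  have h1 := Real.summable_abs_int_rpow (b := 1 + ε) (by linarith)
  have h2 : Summable fun i : ℤ => if i = 0 then (1 : ℝ) else 0 :=
    summable_of_ne_finset_zero (s := {0}) fun i hi => by simpa using hi
  refine (h1.add h2).of_nonneg_of_le (fun i => by positivity) fun i => ?_
  rcases eq_or_ne i 0 with rfl | hi
  · simp [Real.zero_rpow (by linarith : -ε + -1 ≠ 0)]
  · have : 0 < |(i : ℝ)| := by positivity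
    simp only [hi, if_false, add_zero]
    exact Real.rpow_le_rpow_of_nonpos this (by linarith) (by linarith)

theorem exists_sum_decay_le {ε : ℝ} (hε : 0 < ε) :
    ∃ Z : ℝ, 0 < Z ∧ ∀ (s : Finset ℤ) (y : ℝ),
      ∑ i ∈ s, (1 + |y - i|) ^ (-(1 + ε)) ≤ Z := by
  have hsum := summable_one_add_abs_int_rpow hε
  have hpos : 0 < ∑' i : ℤ, (1 + |(i : ℝ)|) ^ (-(1 + ε)) :=
    hsum.tsum_pos (fun i => by positivity) 0 (by positivity)
  refine ⟨2 ^ (1 + ε) * ∑' i : ℤ, (1 + |(i : ℝ)|) ^ (-(1 + ε)), by positivity, fun s y => ?_⟩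
  have h := hsum.sum_int_sub_le (fun i => by positivity) ⌊y⌋ s
  refine le_trans ?_ (mul_le_mul_of_nonneg_left h (by positivity))
  rw [Finset.mul_sum]
  refine Finset.sum_le_sum fun i _ => ?_
  have h1 : (1 + |((⌊y⌋ - i : ℤ) : ℝ)|) / 2 ≤ 1 + |y - i| := by
    have h3 := Int.floor_le y
    have h4 := Int.lt_floor_add_one y
    have : |((⌊y⌋ - i : ℤ) : ℝ)| ≤ |y - i| + 1 := by
      push_cast
      calc |(⌊y⌋ : ℝ) - i| = |(y - i) + (⌊y⌋ - y)| := by ring_nf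
        _ ≤ |y - i| + |⌊y⌋ - y| := abs_add_le _ _
        _ ≤ _ := by gcongr; rw [abs_le]; constructor <;> linarith
    linarith [abs_nonneg (y - i)]
  calc (1 + |y - i|) ^ (-(1 + ε)) ≤ ((1 + |((⌊y⌋ - i : ℤ) : ℝ)|) / 2) ^ (-(1 + ε)) :=
        Real.rpow_le_rpow_of_nonpos (by positivity) h1 (by linarith)
    _ = _ := by
        rw [Real.div_rpow (by positivity) (by norm_num), Real.rpow_neg (by norm_num : (0:ℝ) ≤ 2),
          div_inv_eq_mul, mul_comm]

/-- Sums of the decay profile over a finite set that injects into the integers. -/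
theorem sum_decay_le_of_injOn {ε Z : ℝ} (hZ : ∀ (s : Finset ℤ) (y : ℝ),
      ∑ i ∈ s, (1 + |y - i|) ^ (-(1 + ε)) ≤ Z) {s : Finset ℕ} {e : ℕ → ℤ} (he : InjOn e s) (y : ℝ) :
    ∑ j ∈ s, (1 + |y - e j|) ^ (-(1 + ε)) ≤ Z := by
  classical
  have := hZ (s.image e) y
  rwa [Finset.sum_image he] at this

theorem exists_sum_two_rpow_le {ε : ℝ} (hε : 0 < ε) :
    ∃ Z : ℝ, 0 < Z ∧ ∀ (s : Finset ℕ) (k : ℕ),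
      ∑ m ∈ s, (2 : ℝ) ^ (-(ε * |(k : ℝ) - m|)) ≤ Z := by
  have hsum : Summable fun i : ℤ => (2 : ℝ) ^ (-(ε * |(i : ℝ)|)) := by
    have hlt : (2 : ℝ) ^ (-ε) < 1 := Real.rpow_lt_one_of_one_lt_of_neg (by norm_num) (by linarith)
    have hg := summable_geometric_of_lt_one (by positivity) hlt
    have key : ∀ n : ℕ, (2 : ℝ) ^ (-(ε * (n : ℝ))) = ((2 : ℝ) ^ (-ε)) ^ n := fun n => by
      rw [← Real.rpow_natCast, ← Real.rpow_mul (by norm_num)]; ring_nf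
    refine Summable.of_nat_of_neg ?_ ?_ <;> simpa [key] using hg
  have hpos : 0 < ∑' i : ℤ, (2 : ℝ) ^ (-(ε * |(i : ℝ)|)) :=
    hsum.tsum_pos (fun i => by positivity) 0 (by positivity)
  refine ⟨_, hpos, fun s k => ?_⟩
  have := hsum.sum_int_sub_le (fun i => by positivity) k (s.map Nat.castEmbedding)
  simpa using this

/-- Weighted Schur test. -/
theorem schur_test {ι κ : Type*} (s : Finset ι) (t : Finset κ) {d : ι → κ → ℝ} {μ w : ι → ℝ}
    {w' b : κ → ℝ} {C₁ C₂ : ℝ} (hd : ∀ i ∈ s, ∀ j ∈ t, 0 ≤ d i j) (hμ : ∀ i ∈ s, 0 ≤ μ i)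
    (hC₁ : 0 ≤ C₁) (hw' : ∀ j ∈ t, 0 < w' j)
    (hrow : ∀ i ∈ s, ∑ j ∈ t, d i j * w' j ≤ C₁ * w i)
    (hcol : ∀ j ∈ t, ∑ i ∈ s, μ i * d i j * w i ≤ C₂ * w' j) :
    ∑ i ∈ s, μ i * (∑ j ∈ t, b j * d i j) ^ 2 ≤ C₁ * C₂ * ∑ j ∈ t, b j ^ 2 := by
  have h1 : ∀ i ∈ s, (∑ j ∈ t, b j * d i j) ^ 2 ≤
      (C₁ * w i) * ∑ j ∈ t, d i j * b j ^ 2 / w' j := by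
    intro i hi
    have hcs : (∑ j ∈ t, b j * d i j) ^ 2 ≤
        (∑ j ∈ t, d i j * w' j) * ∑ j ∈ t, d i j * b j ^ 2 / w' j := by
      refine Finset.sum_sq_le_sum_mul_sum_of_sq_le_mul t ?_ ?_ ?_
      · exact fun j hj => mul_nonneg (hd i hi j hj) (hw' j hj).le
      · exact fun j hj => div_nonneg (mul_nonneg (hd i hi j hj) (sq_nonneg _)) (hw' j hj).le
      · intro j hj
        have := (hw' j hj).ne'
        refine le_of_eq ?_
        field_simp
    refine hcs.trans (mul_le_mul_of_nonneg_right (hrow i hi) ?_)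
    exact Finset.sum_nonneg fun j hj =>
      div_nonneg (mul_nonneg (hd i hi j hj) (sq_nonneg _)) (hw' j hj).le
  calc ∑ i ∈ s, μ i * (∑ j ∈ t, b j * d i j) ^ 2
      ≤ ∑ i ∈ s, μ i * ((C₁ * w i) * ∑ j ∈ t, d i j * b j ^ 2 / w' j) :=
        Finset.sum_le_sum fun i hi => mul_le_mul_of_nonneg_left (h1 i hi) (hμ i hi)
    _ = C₁ * ∑ j ∈ t, (∑ i ∈ s, μ i * d i j * w i) * (b j ^ 2 / w' j) := by
        simp only [Finset.mul_sum, Finset.sum_mul]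
        rw [Finset.sum_comm]
        refine Finset.sum_congr rfl fun j _ => Finset.sum_congr rfl fun i _ => by ring
    _ ≤ C₁ * ∑ j ∈ t, (C₂ * w' j) * (b j ^ 2 / w' j) := by
        gcongr with j hj
        · exact div_nonneg (sq_nonneg _) (hw' j hj).le
        · exact hcol j hj
    _ = C₁ * C₂ * ∑ j ∈ t, b j ^ 2 := by
        rw [mul_assoc, Finset.mul_sum t _ C₂]
        congr 1
        refine Finset.sum_congr rfl fun j hj => ?_
        have := (hw' j hj).ne'
        field_simp

/-- A continuous mean zero function on `[0,1]` localized near `t` at the scale `2 ^ (-m)`. -/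
structure IsBump (η c : ℝ) (m : ℕ) (t : ℝ) (φ : ℝ → ℝ) : Prop where
  continuousOn : ContinuousOn φ (Icc 0 1)
  integral_eq_zero : ∫ x in (0 : ℝ)..1, φ x = 0
  decay : ∀ x ∈ Icc (0 : ℝ) 1,
    |φ x| ≤ c * 2 ^ ((m : ℝ) / 2) * (1 + 2 ^ m * |x - t|) ^ (-(1 + η))
  holder : ∀ x ∈ Icc (0 : ℝ) 1, ∀ y ∈ Icc (0 : ℝ) 1, |x - y| ≤ ((2 : ℝ) ^ m)⁻¹ →
    |φ x - φ y| ≤ c * 2 ^ ((m : ℝ) / 2) * (2 ^ m * |x - y|) ^ η *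
      (1 + 2 ^ m * |x - t|) ^ (-(1 + η))

theorem ContinuousOn.intervalIntegrable_of_mem_Icc {φ : ℝ → ℝ} (h : ContinuousOn φ (Icc 0 1))
    {p q : ℝ} (hp : p ∈ Icc (0 : ℝ) 1) (hq : q ∈ Icc (0 : ℝ) 1) :
    IntervalIntegrable φ volume p q :=
  (h.mono (ordConnected_Icc.uIcc_subset hp hq)).intervalIntegrable

theorem integral_decay_right {u η t p q : ℝ} (hu : 0 < u) (hη : 0 < η) (htp : t ≤ p) (hpq : p ≤ q) :
    IntervalIntegrable (fun y => (1 + u * |y - t|) ^ (-(1 + η))) volume p q ∧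
    ∫ y in p..q, (1 + u * |y - t|) ^ (-(1 + η)) ≤ (u * η)⁻¹ * (1 + u * |p - t|) ^ (-η) := by
  have hcont : Continuous fun y => (1 + u * |y - t|) ^ (-(1 + η)) :=
    Continuous.rpow_const (by fun_prop) fun y => Or.inl (by positivity)
  refine ⟨hcont.intervalIntegrable _ _, ?_⟩
  have hder : ∀ y ∈ uIcc p q, HasDerivAt (fun y => -(u * η)⁻¹ * (1 + u * (y - t)) ^ (-η))
      ((1 + u * |y - t|) ^ (-(1 + η))) y := by
    intro y hy
    rw [uIcc_of_le hpq] at hy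
    have hyt : 0 ≤ y - t := by linarith [hy.1]
    have hlin : HasDerivAt (fun y => 1 + u * (y - t)) u y := by
      simpa using (((hasDerivAt_id y).sub_const t).const_mul u).const_add 1
    have h := (hlin.rpow_const (p := -η) (Or.inl (by positivity))).const_mul (-(u * η)⁻¹)
    refine h.congr_deriv ?_
    rw [abs_of_nonneg hyt, show -η - 1 = -(1 + η) by ring]
    field_simp
  rw [intervalIntegral.integral_eq_sub_of_hasDerivAt hder (hcont.intervalIntegrable _ _),
    abs_of_nonneg (by linarith : 0 ≤ p - t)]
  have : 0 ≤ (u * η)⁻¹ * (1 + u * (q - t)) ^ (-η) := by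
    have : 0 ≤ q - t := by linarith
    positivity
  linarith

theorem integral_decay_left {u η t p q : ℝ} (hu : 0 < u) (hη : 0 < η) (hqt : q ≤ t) (hpq : p ≤ q) :
    IntervalIntegrable (fun y => (1 + u * |y - t|) ^ (-(1 + η))) volume p q ∧
    ∫ y in p..q, (1 + u * |y - t|) ^ (-(1 + η)) ≤ (u * η)⁻¹ * (1 + u * |q - t|) ^ (-η) := by
  have hcont : Continuous fun y => (1 + u * |y - t|) ^ (-(1 + η)) :=
    Continuous.rpow_const (by fun_prop) fun y => Or.inl (by positivity)
  refine ⟨hcont.intervalIntegrable _ _, ?_⟩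
  have h := (integral_decay_right hu hη (neg_le_neg hqt) (neg_le_neg hpq)).2
  have h2 := intervalIntegral.integral_comp_neg (a := p) (b := q)
    (fun y => (1 + u * |y - -t|) ^ (-(1 + η)))
  rw [← h2] at h
  have e : ∀ y : ℝ, |-y - -t| = |y - t| := fun y => by
    rw [show -y - -t = -(y - t) by ring, abs_neg]
  simpa only [e] using h

namespace IsBump

variable {η c t : ℝ} {m : ℕ} {φ : ℝ → ℝ}

theorem abs_integral_le_of_decay (h : IsBump η c m t φ) {p q I : ℝ} (hc : 0 ≤ c) (hp : 0 ≤ p)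
    (hpq : p ≤ q) (hq : q ≤ 1)
    (hI : IntervalIntegrable (fun y => (1 + 2 ^ m * |y - t|) ^ (-(1 + η))) volume p q ∧
      ∫ y in p..q, (1 + 2 ^ m * |y - t|) ^ (-(1 + η)) ≤ (2 ^ m * η)⁻¹ * I) :
    |∫ x in p..q, φ x| ≤ c / η * (2 ^ ((m : ℝ) / 2) / 2 ^ m) * I := by
  calc |∫ x in p..q, φ x|
      ≤ ∫ x in p..q, c * 2 ^ ((m : ℝ) / 2) * (1 + 2 ^ m * |x - t|) ^ (-(1 + η)) := by
        rw [← Real.norm_eq_abs]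
        refine intervalIntegral.norm_integral_le_of_norm_le hpq ?_ (hI.1.const_mul _)
        refine Filter.Eventually.of_forall fun x hx => ?_
        exact h.decay x ⟨by linarith [hx.1], hx.2.trans hq⟩
    _ ≤ c * 2 ^ ((m : ℝ) / 2) * ((2 ^ m * η)⁻¹ * I) := by
        rw [intervalIntegral.integral_const_mul]
        exact mul_le_mul_of_nonneg_left hI.2 (by positivity)
    _ = _ := by rw [mul_inv]; ring

theorem abs_integral_zero_le (h : IsBump η c m t φ) (hη : 0 < η) (hc : 0 ≤ c) {x : ℝ}
    (hx : x ∈ Icc (0 : ℝ) 1) :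
    |∫ y in (0 : ℝ)..x, φ y| ≤
      c / η * (2 ^ ((m : ℝ) / 2) / 2 ^ m) * (1 + 2 ^ m * |x - t|) ^ (-η) := by
  have hu : (0 : ℝ) < 2 ^ m := by positivity
  rcases le_total x t with hxt | hxt
  · exact h.abs_integral_le_of_decay hc le_rfl hx.1 hx.2 (integral_decay_left hu hη hxt hx.1)
  · have hadd := intervalIntegral.integral_add_adjacent_intervals
      (h.continuousOn.intervalIntegrable_of_mem_Icc (left_mem_Icc.2 zero_le_one) hx)
      (h.continuousOn.intervalIntegrable_of_mem_Icc hx (right_mem_Icc.2 zero_le_one))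
    rw [h.integral_eq_zero] at hadd
    rw [show ∫ y in (0 : ℝ)..x, φ y = -∫ y in x..1, φ y by linarith, abs_neg]
    exact h.abs_integral_le_of_decay hc hx.1 hx.2 le_rfl (integral_decay_right hu hη hxt hx.2)

theorem abs_integral_le_length (h : IsBump η c m t φ) (hη : 0 < η) (hc : 0 ≤ c) {p q L v : ℝ}
    (hp : 0 ≤ p) (hpq : p ≤ q) (hq : q ≤ 1) (hL : 2 ^ m * (q - p) ≤ L) (hv : 1 ≤ v)
    (hvx : ∀ x ∈ Icc p q, v ≤ 1 + 2 ^ m * |x - t|) :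
    |∫ x in p..q, φ x| ≤ c * (2 ^ ((m : ℝ) / 2) / 2 ^ m) * (L * v ^ (-(1 + η))) := by
  have hb : |∫ x in p..q, φ x| ≤ c * 2 ^ ((m : ℝ) / 2) * v ^ (-(1 + η)) * |q - p| := by
    rw [← Real.norm_eq_abs]
    refine intervalIntegral.norm_integral_le_of_norm_le_const fun x hx => ?_
    rw [uIoc_of_le hpq] at hx
    refine (h.decay x ⟨by linarith [hx.1], hx.2.trans hq⟩).trans ?_
    refine mul_le_mul_of_nonneg_left ?_ (by positivity)
    exact Real.rpow_le_rpow_of_nonpos (by linarith) (hvx x ⟨hx.1.le, hx.2⟩) (by linarith)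
  refine hb.trans ?_
  have hu : (0 : ℝ) < 2 ^ m := by positivity
  rw [abs_of_nonneg (by linarith : 0 ≤ q - p)]
  have hv' : 0 ≤ v ^ (-(1 + η)) := by positivity
  have hqp : q - p ≤ L / 2 ^ m := by rw [le_div_iff₀ hu]; linarith
  calc c * 2 ^ ((m : ℝ) / 2) * v ^ (-(1 + η)) * (q - p)
      ≤ c * 2 ^ ((m : ℝ) / 2) * v ^ (-(1 + η)) * (L / 2 ^ m) := by gcongr
    _ = _ := by ring

end IsBump

/-- Bound for the integral of a bump over an interval of relative length `L` in terms of the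
relative distance `v` to an endpoint. -/
def endpointDecay (η L v : ℝ) : ℝ := min (v ^ (-η)) (L * v ^ (-(1 + η)))

theorem endpointDecay_nonneg {η L v : ℝ} (hL : 0 ≤ L) (hv : 0 ≤ v) : 0 ≤ endpointDecay η L v :=
  le_min (by positivity) (by positivity)

theorem rpow_neg_eq_rpow_mul {v : ℝ} (hv : 0 < v) (a b : ℝ) : v ^ (-b) = v ^ a * v ^ (-(a + b)) := by
  rw [← Real.rpow_add hv]; ring_nf

theorem rpow_neg_le_endpointDecay {η L v : ℝ} (hv : 1 ≤ v) (hvL : v ≤ 2 * L) :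
    v ^ (-η) ≤ 2 * endpointDecay η L v := by
  have hv0 : 0 < v := by linarith
  have h1 := rpow_neg_eq_rpow_mul hv0 1 η
  rw [Real.rpow_one] at h1
  have h2 : 0 ≤ v ^ (-(1 + η)) := by positivity
  have h3 : 0 ≤ v ^ (-η) := by positivity
  rw [endpointDecay, mul_min_of_nonneg _ _ (by norm_num)]
  refine le_min (by linarith) ?_
  rw [h1]
  nlinarith

theorem endpointDecay_le_rpow {η L v : ℝ} (hη : 0 < η) (hη1 : η < 1) (hL : 0 < L) (hv : 0 < v) :
    endpointDecay η L v ≤ L ^ (1 - η / 2) * v ^ (-(1 + η / 2)) := by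
  rcases le_total v L with h | h
  · refine (min_le_left _ _).trans ?_
    rw [rpow_neg_eq_rpow_mul hv (1 - η / 2) η, show 1 - η / 2 + η = 1 + η / 2 by ring]
    gcongr
    linarith
  · refine (min_le_right _ _).trans ?_
    rw [rpow_neg_eq_rpow_mul hv (η / 2) (1 + η / 2), show η / 2 + (1 + η / 2) = 1 + η by ring,
      ← mul_assoc]
    gcongr
    calc L = L ^ (1 - η / 2) * L ^ (η / 2) := by rw [← Real.rpow_add hL]; simp
      _ ≤ _ := by gcongr

theorem endpointDecay_le_scaled {η L v : ℝ} (hη : 0 < η) (hη1 : η < 1) (hL : 1 ≤ L) (hv : 1 ≤ v) :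
    endpointDecay η L v ≤ 4 * (1 + v / L) ^ (-(1 + η)) := by
  have hL0 : 0 < L := by linarith
  have hv0 : 0 < v := by linarith
  have h2 : (1 : ℝ) ≤ 4 * 2 ^ (-(1 + η)) := by
    calc (1 : ℝ) = 4 * 2 ^ (-(2 : ℝ)) := by
          rw [Real.rpow_neg (by norm_num)]; norm_num
      _ ≤ _ := by
          gcongr
          · norm_num
          · linarith
  rcases le_total v L with h | h
  · calc endpointDecay η L v ≤ v ^ (-η) := min_le_left _ _
      _ ≤ 1 := Real.rpow_le_one_of_one_le_of_nonpos hv (by linarith)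
      _ ≤ 4 * 2 ^ (-(1 + η)) := h2
      _ ≤ _ := by
          refine mul_le_mul_of_nonneg_left ?_ (by norm_num)
          refine Real.rpow_le_rpow_of_nonpos (by positivity) ?_ (by linarith)
          have : v / L ≤ 1 := by rwa [div_le_one hL0]
          linarith
  · have h3 : (2 * (v / L)) ^ (-(1 + η)) ≤ (1 + v / L) ^ (-(1 + η)) := by
      refine Real.rpow_le_rpow_of_nonpos (by positivity) ?_ (by linarith)
      have : 1 ≤ v / L := by rwa [one_le_div hL0]
      linarith
    have h4 : L ≤ L ^ (1 + η) := by
      calc L = L ^ (1 : ℝ) := (Real.rpow_one L).symm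
        _ ≤ _ := Real.rpow_le_rpow_of_exponent_le hL (by linarith)
    calc endpointDecay η L v ≤ 1 * (L * v ^ (-(1 + η))) := by
          rw [one_mul]; exact min_le_right _ _
      _ ≤ (4 * 2 ^ (-(1 + η))) * (L ^ (1 + η) * v ^ (-(1 + η))) := by gcongr
      _ = 4 * (2 * (v / L)) ^ (-(1 + η)) := by
          rw [Real.mul_rpow (by norm_num) (by positivity), Real.div_rpow hv0.le hL0.le,
            Real.rpow_neg hL0.le]
          field_simp
      _ ≤ _ := by gcongr

namespace IsBump

variable {η c t : ℝ} {m : ℕ} {φ : ℝ → ℝ}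

theorem abs_integral_le_endpointDecay (h : IsBump η c m t φ) (hη : 0 < η) (hη1 : η < 1)
    (hc : 0 ≤ c) {p q L : ℝ} (hp : 0 ≤ p) (hpq : p ≤ q) (hq : q ≤ 1) (hL1 : 1 ≤ L)
    (hL : 2 ^ m * (q - p) ≤ L) :
    |∫ x in p..q, φ x| ≤ 2 * c / η * (2 ^ ((m : ℝ) / 2) / 2 ^ m) *
      (endpointDecay η L (1 + 2 ^ m * |p - t|) + endpointDecay η L (1 + 2 ^ m * |q - t|)) := by
  have hpI : p ∈ Icc (0 : ℝ) 1 := ⟨hp, hpq.trans hq⟩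
  have hqI : q ∈ Icc (0 : ℝ) 1 := ⟨hp.trans hpq, hq⟩
  have hu : (0 : ℝ) < 2 ^ m := by positivity
  set vp := 1 + 2 ^ m * |p - t| with hvp
  set vq := 1 + 2 ^ m * |q - t| with hvq
  have hvp1 : 1 ≤ vp := by rw [hvp]; linarith [mul_nonneg hu.le (abs_nonneg (p - t))]
  have hvq1 : 1 ≤ vq := by rw [hvq]; linarith [mul_nonneg hu.le (abs_nonneg (q - t))]
  set Q : ℝ := 2 ^ ((m : ℝ) / 2) / 2 ^ m with hQ
  have hQ0 : 0 ≤ Q := by positivity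
  have hWp := endpointDecay_nonneg (η := η) (L := L) (v := vp) (by linarith) (by linarith)
  have hWq := endpointDecay_nonneg (η := η) (L := L) (v := vq) (by linarith) (by linarith)
  have hcη : c ≤ c / η := by rw [le_div_iff₀ hη]; nlinarith
  have hK : 0 ≤ c / η * Q := by positivity
  have hprim : |∫ x in p..q, φ x| ≤ c / η * Q * (vp ^ (-η) + vq ^ (-η)) := by
    have hsub := intervalIntegral.integral_interval_sub_left
      (h.continuousOn.intervalIntegrable_of_mem_Icc (left_mem_Icc.2 zero_le_one) hqI)
      (h.continuousOn.intervalIntegrable_of_mem_Icc (left_mem_Icc.2 zero_le_one) hpI)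
    rw [← hsub]
    have h1 := h.abs_integral_zero_le hη hc hpI
    have h2 := h.abs_integral_zero_le hη hc hqI
    have h3 := abs_sub (∫ y in (0 : ℝ)..q, φ y) (∫ y in (0 : ℝ)..p, φ y)
    rw [mul_add]
    linarith
  have outside : ∀ v, 1 ≤ v → v ≤ vp → v ≤ vq → (∀ x ∈ Icc p q, v ≤ 1 + 2 ^ m * |x - t|) →
      |∫ x in p..q, φ x| ≤ 2 * c / η * Q * endpointDecay η L v := by
    intro v hv h1 h2 h3
    rw [endpointDecay, mul_min_of_nonneg _ _ (by positivity)]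
    refine le_min (hprim.trans ?_) ((h.abs_integral_le_length hη hc hp hpq hq hL hv h3).trans ?_)
    · have e1 : vp ^ (-η) ≤ v ^ (-η) :=
        Real.rpow_le_rpow_of_nonpos (by linarith) h1 (by linarith)
      have e2 : vq ^ (-η) ≤ v ^ (-η) :=
        Real.rpow_le_rpow_of_nonpos (by linarith) h2 (by linarith)
      calc c / η * Q * (vp ^ (-η) + vq ^ (-η)) ≤ c / η * Q * (v ^ (-η) + v ^ (-η)) := by gcongr
        _ = _ := by ring
    · have : c ≤ 2 * c / η := by
        rw [mul_div_assoc]; linarith [div_nonneg hc hη.le]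
      gcongr
  have hfin : ∀ W₁ W₂ : ℝ, 0 ≤ W₂ → |∫ x in p..q, φ x| ≤ 2 * c / η * Q * W₁ →
      |∫ x in p..q, φ x| ≤ 2 * c / η * Q * (W₁ + W₂) := fun W₁ W₂ hW h1 => by
    have : 0 ≤ 2 * c / η * Q * W₂ := by positivity
    linarith
  rcases le_total t p with htp | htp
  · have hge : ∀ x, p ≤ x → vp ≤ 1 + 2 ^ m * |x - t| := fun x hx => by
      rw [hvp, abs_of_nonneg (by linarith : 0 ≤ x - t), abs_of_nonneg (by linarith : 0 ≤ p - t)]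
      gcongr
    exact hfin _ _ hWq (outside vp hvp1 le_rfl (hge q hpq) fun x hx => hge x hx.1)
  rcases le_total q t with hqt | hqt
  · have hge : ∀ x, x ≤ q → vq ≤ 1 + 2 ^ m * |x - t| := fun x hx => by
      rw [hvq, abs_of_nonpos (by linarith : x - t ≤ 0), abs_of_nonpos (by linarith : q - t ≤ 0)]
      gcongr
    rw [add_comm (endpointDecay η L vp)]
    exact hfin _ _ hWp (outside vq hvq1 (hge p hpq) le_rfl fun x hx => hge x hx.2)
  · have e1 : vp ≤ 2 * L := by
      rw [hvp, abs_of_nonpos (by linarith : p - t ≤ 0)]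
      nlinarith
    have e2 : vq ≤ 2 * L := by
      rw [hvq, abs_of_nonneg (by linarith : 0 ≤ q - t)]
      nlinarith
    have e3 := rpow_neg_le_endpointDecay (η := η) hvp1 e1
    have e4 := rpow_neg_le_endpointDecay (η := η) hvq1 e2
    calc |∫ x in p..q, φ x| ≤ c / η * Q * (vp ^ (-η) + vq ^ (-η)) := hprim
      _ ≤ c / η * Q * (2 * endpointDecay η L vp + 2 * endpointDecay η L vq) := by gcongr
      _ = _ := by ring

end IsBump

/-- Average of `φ` over the dyadic interval `[l / 2 ^ k, (l + 1) / 2 ^ k]`. -/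
def dyadicAvg (φ : ℝ → ℝ) (k l : ℕ) : ℝ :=
  2 ^ k * ∫ x in ((l : ℝ) / 2 ^ k)..(((l : ℝ) + 1) / 2 ^ k), φ x

/-- Half the difference of the averages over the two halves of a dyadic interval. -/
def dyadicDiff (φ : ℝ → ℝ) (k l : ℕ) : ℝ :=
  (dyadicAvg φ (k + 1) (2 * l) - dyadicAvg φ (k + 1) (2 * l + 1)) / 2

theorem dyadic_div_mem_Icc {k l : ℕ} (hl : l ≤ 2 ^ k) : (l : ℝ) / 2 ^ k ∈ Icc (0 : ℝ) 1 := by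
  have : (l : ℝ) ≤ 2 ^ k := by exact_mod_cast hl
  exact ⟨by positivity, by rw [div_le_one (by positivity)]; exact this⟩

theorem dyadicDiff_eq (φ : ℝ → ℝ) (k l : ℕ) :
    dyadicDiff φ k l = 2 ^ k *
      ((∫ x in (((2 * l : ℕ) : ℝ) / 2 ^ (k + 1))..(((2 * l + 1 : ℕ) : ℝ) / 2 ^ (k + 1)), φ x) -
        ∫ x in (((2 * l + 1 : ℕ) : ℝ) / 2 ^ (k + 1))..(((2 * l + 2 : ℕ) : ℝ) / 2 ^ (k + 1)), φ x) := by
  simp only [dyadicDiff, dyadicAvg]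
  push_cast
  rw [show (2 * (l : ℝ) + 1 + 1) = 2 * l + 2 by ring]
  ring

theorem sum_range_mul_eq {M : Type*} [AddCommMonoid M] (f : ℕ → M) (n N : ℕ) :
    ∑ l ∈ Finset.range (n * N), f l =
      ∑ q ∈ Finset.range n, ∑ r ∈ Finset.range N, f (q * N + r) := by
  induction n with
  | zero => simp
  | succ n ih => rw [add_mul, one_mul, Finset.sum_range_add, ih, Finset.sum_range_succ]

namespace IsBump

section Single

variable {η c t : ℝ} {m : ℕ} {φ : ℝ → ℝ}

theorem abs_dyadicDiff_le_fine (h : IsBump η c m t φ) (hη : 0 < η) (hη1 : η < 1) (hc : 0 ≤ c)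
    {k l : ℕ} (hkm : k ≤ m) (hl : l < 2 ^ k) :
    |dyadicDiff φ k l| ≤ 2 ^ k * (2 * c / η * (2 ^ ((m : ℝ) / 2) / 2 ^ m)) *
      (endpointDecay η (2 ^ m / 2 ^ k) (1 + 2 ^ m * |((2 * l : ℕ) : ℝ) / 2 ^ (k + 1) - t|) +
        2 * endpointDecay η (2 ^ m / 2 ^ k) (1 + 2 ^ m * |((2 * l + 1 : ℕ) : ℝ) / 2 ^ (k + 1) - t|) +
        endpointDecay η (2 ^ m / 2 ^ k) (1 + 2 ^ m * |((2 * l + 2 : ℕ) : ℝ) / 2 ^ (k + 1) - t|)) := by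
  have hL1 : (1 : ℝ) ≤ 2 ^ m / 2 ^ k := by
    rw [one_le_div (by positivity)]; exact pow_le_pow_right₀ (by norm_num) hkm
  have hpow : 2 ^ (k + 1) = 2 * 2 ^ k := pow_succ' 2 k
  have m0 := dyadic_div_mem_Icc (k := k + 1) (l := 2 * l) (by omega)
  have m1 := dyadic_div_mem_Icc (k := k + 1) (l := 2 * l + 1) (by omega)
  have m2 := dyadic_div_mem_Icc (k := k + 1) (l := 2 * l + 2) (by omega)
  have hlen : ∀ a : ℕ, (2 : ℝ) ^ m * (((a + 1 : ℕ) : ℝ) / 2 ^ (k + 1) - (a : ℝ) / 2 ^ (k + 1)) ≤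
      2 ^ m / 2 ^ k := fun a => by
    rw [← sub_div, Nat.cast_add, Nat.cast_one, add_sub_cancel_left, ← mul_div_assoc, mul_one]
    gcongr
    · norm_num
    · omega
  have hmono : ∀ a : ℕ, (a : ℝ) / 2 ^ (k + 1) ≤ ((a + 1 : ℕ) : ℝ) / 2 ^ (k + 1) := fun a => by
    gcongr; omega
  have h1 := h.abs_integral_le_endpointDecay hη hη1 hc m0.1 (hmono _) m1.2 hL1 (hlen _)
  have h2 := h.abs_integral_le_endpointDecay hη hη1 hc m1.1 (hmono _) m2.2 hL1 (hlen _)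
  rw [dyadicDiff_eq, abs_mul, abs_of_pos (by positivity : (0 : ℝ) < 2 ^ k), mul_assoc]
  refine mul_le_mul_of_nonneg_left ?_ (by positivity)
  refine (abs_sub _ _).trans ((add_le_add h1 h2).trans (le_of_eq ?_))
  ring

theorem abs_dyadicDiff_le_coarse (h : IsBump η c m t φ) (hη : 0 < η) (hη1 : η < 1) (hc : 0 ≤ c)
    {k l : ℕ} (hkm : m ≤ k) (hl : l < 2 ^ k) :
    |dyadicDiff φ k l| ≤ 2 * c * 2 ^ ((m : ℝ) / 2) * (2 ^ m / 2 ^ k) ^ η *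
      (1 + 2 ^ m * |(l : ℝ) / 2 ^ k - t|) ^ (-(1 + η)) := by
  have hpow : 2 ^ (k + 1) = 2 * 2 ^ k := pow_succ' 2 k
  have m0 := dyadic_div_mem_Icc (k := k + 1) (l := 2 * l) (by omega)
  have m1 := dyadic_div_mem_Icc (k := k + 1) (l := 2 * l + 1) (by omega)
  have m2 := dyadic_div_mem_Icc (k := k + 1) (l := 2 * l + 2) (by omega)
  set δ : ℝ := 1 / 2 ^ (k + 1) with hδ
  have hδ0 : 0 < δ := by positivity
  set p : ℝ := (l : ℝ) / 2 ^ k with hp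
  have e0 : ((2 * l : ℕ) : ℝ) / 2 ^ (k + 1) = p := by
    rw [hp, pow_succ']; push_cast; field_simp
  have e1 : ((2 * l + 1 : ℕ) : ℝ) / 2 ^ (k + 1) = p + δ := by
    rw [← e0, hδ]; push_cast; ring
  have e2 : ((2 * l + 2 : ℕ) : ℝ) / 2 ^ (k + 1) = p + δ + δ := by
    rw [← e0, hδ]; push_cast; ring
  rw [e0] at m0; rw [e1] at m1; rw [e2] at m2
  have hmδ : (2 : ℝ) ^ m * δ ≤ 1 := by
    rw [hδ, ← mul_div_assoc, mul_one, div_le_one (by positivity)]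
    exact pow_le_pow_right₀ (by norm_num) (by omega)
  have hshift : ∫ x in (p + δ)..(p + δ + δ), φ x = ∫ x in p..(p + δ), φ (x + δ) :=
    (intervalIntegral.integral_comp_add_right φ δ).symm
  have hint : IntervalIntegrable (fun x => φ (x + δ)) volume p (p + δ) := by
    have := (h.continuousOn.intervalIntegrable_of_mem_Icc m1 m2).comp_add_right δ
    simpa using this
  rw [dyadicDiff_eq, e0, e1, e2, hshift, ← intervalIntegral.integral_sub
    (h.continuousOn.intervalIntegrable_of_mem_Icc m0 m1) hint, abs_mul,
    abs_of_pos (by positivity : (0 : ℝ) < 2 ^ k)]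
  set v : ℝ := 1 + 2 ^ m * |p - t| with hv
  have hv1 : 1 ≤ v := by
    have : (0 : ℝ) ≤ 2 ^ m * |p - t| := by positivity
    linarith
  have hbound : |∫ x in p..(p + δ), (φ x - φ (x + δ))| ≤
      c * 2 ^ ((m : ℝ) / 2) * (2 ^ m / 2 ^ k) ^ η * (4 * v ^ (-(1 + η))) * |p + δ - p| := by
    rw [← Real.norm_eq_abs]
    refine intervalIntegral.norm_integral_le_of_norm_le_const fun x hx => ?_
    rw [uIoc_of_le (by linarith)] at hx
    have hx0 : x ∈ Icc (0 : ℝ) 1 := ⟨by linarith [hx.1, m0.1], by linarith [hx.2, m1.2]⟩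
    have hx1 : x + δ ∈ Icc (0 : ℝ) 1 := ⟨by linarith [hx.1, m0.1], by linarith [hx.2, m2.2]⟩
    have hxd : |x - (x + δ)| = δ := by
      rw [show x - (x + δ) = -δ by ring, abs_neg, abs_of_pos hδ0]
    have hh := h.holder x hx0 (x + δ) hx1 (by
      rw [hxd, ← one_div, le_div_iff₀ (by positivity)]; linarith)
    rw [hxd] at hh
    refine hh.trans ?_
    have hpos : (0 : ℝ) < 2 ^ m := by positivity
    have f1 : ((2 : ℝ) ^ m * δ) ^ η ≤ (2 ^ m / 2 ^ k) ^ η := by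
      refine Real.rpow_le_rpow (by positivity) ?_ hη.le
      rw [hδ, ← mul_div_assoc, mul_one]
      gcongr
      · norm_num
      · omega
    have f2 : v / 2 ≤ 1 + 2 ^ m * |x - t| := by
      have g1 : |p - t| ≤ |x - t| + δ := by
        calc |p - t| = |(x - t) - (x - p)| := by ring_nf
          _ ≤ |x - t| + |x - p| := abs_sub _ _
          _ ≤ _ := by
            gcongr
            rw [abs_of_pos (by linarith [hx.1])]
            linarith [hx.2]
      have g2 : (2 : ℝ) ^ m * |p - t| ≤ 2 ^ m * |x - t| + 2 ^ m * δ := by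
        rw [← mul_add]; gcongr
      have g3 : (0 : ℝ) ≤ 2 ^ m * |x - t| := by positivity
      linarith
    have f3 : (1 + 2 ^ m * |x - t|) ^ (-(1 + η)) ≤ 4 * v ^ (-(1 + η)) := by
      calc (1 + 2 ^ m * |x - t|) ^ (-(1 + η)) ≤ (v / 2) ^ (-(1 + η)) :=
            Real.rpow_le_rpow_of_nonpos (by linarith) f2 (by linarith)
        _ = 2 ^ (1 + η) * v ^ (-(1 + η)) := by
            rw [Real.div_rpow (by linarith) (by norm_num), Real.rpow_neg (by norm_num : (0:ℝ) ≤ 2),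
              div_inv_eq_mul, mul_comm]
        _ ≤ 2 ^ (2 : ℝ) * v ^ (-(1 + η)) := by
            gcongr
            · norm_num
            · linarith
        _ = _ := by norm_num
    gcongr
  calc (2 : ℝ) ^ k * |∫ x in p..(p + δ), (φ x - φ (x + δ))|
      ≤ 2 ^ k * (c * 2 ^ ((m : ℝ) / 2) * (2 ^ m / 2 ^ k) ^ η * (4 * v ^ (-(1 + η))) *
          |p + δ - p|) := by gcongr
    _ = _ := by
        rw [add_sub_cancel_left, abs_of_pos hδ0, hδ, pow_succ']
        field_simp
        ring

end Single

section Sums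

variable {η c Z : ℝ} {m k : ℕ} {t : ℕ → ℝ} {φ : ℕ → ℝ → ℝ} {S : Finset ℕ} {e : ℕ → ℤ}

theorem sum_abs_dyadicDiff_le_fine (h : ∀ j ∈ S, IsBump η c m (t j) (φ j)) (hη : 0 < η)
    (hη1 : η < 1) (hc : 0 ≤ c) (he : InjOn e S) (het : ∀ j ∈ S, 2 ^ m * t j = e j)
    (hZ : ∀ (s : Finset ℤ) (y : ℝ), ∑ i ∈ s, (1 + |y - i|) ^ (-(1 + η / 2)) ≤ Z)
    (hkm : k ≤ m) {l : ℕ} (hl : l < 2 ^ k) :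
    ∑ j ∈ S, |dyadicDiff (φ j) k l| ≤
      8 * c / η * Z * (2 ^ ((m : ℝ) / 2) * (2 ^ m / 2 ^ k) ^ (-(η / 2))) := by
  have hL : (0 : ℝ) < 2 ^ m / 2 ^ k := by positivity
  have hW : ∀ x : ℝ, ∑ j ∈ S, endpointDecay η (2 ^ m / 2 ^ k) (1 + 2 ^ m * |x - t j|) ≤
      (2 ^ m / 2 ^ k) ^ (1 - η / 2) * Z := by
    intro x
    refine le_trans ?_ (mul_le_mul_of_nonneg_left (sum_decay_le_of_injOn hZ he (2 ^ m * x))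
      (by positivity))
    rw [Finset.mul_sum]
    refine Finset.sum_le_sum fun j hj => ?_
    have : (2 : ℝ) ^ m * |x - t j| = |2 ^ m * x - e j| := by
      rw [← het j hj, ← mul_sub, abs_mul, abs_of_pos (by positivity : (0 : ℝ) < 2 ^ m)]
    rw [← this]
    exact endpointDecay_le_rpow hη hη1 hL (by positivity)
  refine (Finset.sum_le_sum fun j hj =>
    (h j hj).abs_dyadicDiff_le_fine hη hη1 hc hkm hl).trans ?_
  rw [← Finset.mul_sum, Finset.sum_add_distrib, Finset.sum_add_distrib, ← Finset.mul_sum]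
  calc _ ≤ (2 : ℝ) ^ k * (2 * c / η * (2 ^ ((m : ℝ) / 2) / 2 ^ m)) *
        ((2 ^ m / 2 ^ k) ^ (1 - η / 2) * Z + 2 * ((2 ^ m / 2 ^ k) ^ (1 - η / 2) * Z) +
          (2 ^ m / 2 ^ k) ^ (1 - η / 2) * Z) := by
        gcongr
        · exact hW _
        · exact hW _
        · exact hW _
    _ = _ := by
        rw [sub_eq_add_neg, Real.rpow_add hL, Real.rpow_one]
        field_simp
        ring

theorem sum_abs_dyadicDiff_le_coarse (h : ∀ j ∈ S, IsBump η c m (t j) (φ j)) (hη : 0 < η)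
    (hη1 : η < 1) (hc : 0 ≤ c) (he : InjOn e S) (het : ∀ j ∈ S, 2 ^ m * t j = e j)
    (hZ : ∀ (s : Finset ℤ) (y : ℝ), ∑ i ∈ s, (1 + |y - i|) ^ (-(1 + η)) ≤ Z)
    (hkm : m ≤ k) {l : ℕ} (hl : l < 2 ^ k) :
    ∑ j ∈ S, |dyadicDiff (φ j) k l| ≤ 2 * c * Z * (2 ^ ((m : ℝ) / 2) * (2 ^ m / 2 ^ k) ^ η) := by
  have hW := sum_decay_le_of_injOn hZ he (2 ^ m * ((l : ℝ) / 2 ^ k))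
  refine (Finset.sum_le_sum fun j hj =>
    (h j hj).abs_dyadicDiff_le_coarse hη hη1 hc hkm hl).trans ?_
  rw [← Finset.mul_sum]
  calc _ = 2 * c * 2 ^ ((m : ℝ) / 2) * (2 ^ m / 2 ^ k) ^ η *
        ∑ j ∈ S, (1 + |2 ^ m * ((l : ℝ) / 2 ^ k) - e j|) ^ (-(1 + η)) := by
        congr 1
        refine Finset.sum_congr rfl fun j hj => ?_
        rw [← het j hj, ← mul_sub, abs_mul, abs_of_pos (by positivity : (0 : ℝ) < 2 ^ m)]
    _ ≤ 2 * c * 2 ^ ((m : ℝ) / 2) * (2 ^ m / 2 ^ k) ^ η * Z := by gcongr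
    _ = _ := by ring

theorem sum_range_abs_dyadicDiff_le_fine {t : ℝ} {φ : ℝ → ℝ} (h : IsBump η c m t φ) (hη : 0 < η)
    (hη1 : η < 1) (hc : 0 ≤ c)
    (hZ : ∀ (s : Finset ℤ) (y : ℝ), ∑ i ∈ s, (1 + |y - i|) ^ (-(1 + η)) ≤ Z)
    (hkm : k ≤ m) :
    ∑ l ∈ Finset.range (2 ^ k), |dyadicDiff φ k l| ≤
      2 ^ k * (32 * c / η * Z * (2 ^ ((m : ℝ) / 2) / 2 ^ m)) := by
  have hL : (1 : ℝ) ≤ 2 ^ m / 2 ^ k := by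
    rw [one_le_div (by positivity)]; exact pow_le_pow_right₀ (by norm_num) hkm
  have hW : ∀ i : ℕ, ∑ l ∈ Finset.range (2 ^ k), endpointDecay η (2 ^ m / 2 ^ k)
      (1 + 2 ^ m * |((2 * l + i : ℕ) : ℝ) / 2 ^ (k + 1) - t|) ≤ 4 * Z := by
    intro i
    refine le_trans ?_ (mul_le_mul_of_nonneg_left
      (sum_decay_le_of_injOn hZ (s := Finset.range (2 ^ k)) (Nat.cast_injective.injOn)
        (2 ^ k * t - i / 2)) (by norm_num))
    rw [Finset.mul_sum]
    refine Finset.sum_le_sum fun l _ => ?_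
    have h0 : (0 : ℝ) ≤ 2 ^ m * |((2 * l + i : ℕ) : ℝ) / 2 ^ (k + 1) - t| := by positivity
    refine (endpointDecay_le_scaled hη hη1 hL (by linarith)).trans ?_
    refine mul_le_mul_of_nonneg_left ?_ (by norm_num)
    refine Real.rpow_le_rpow_of_nonpos (by positivity) ?_ (by linarith)
    have h1 : |2 ^ k * t - i / 2 - ((l : ℤ) : ℝ)| =
        2 ^ m * |((2 * l + i : ℕ) : ℝ) / 2 ^ (k + 1) - t| / (2 ^ m / 2 ^ k) := by
      rw [show 2 ^ k * t - i / 2 - ((l : ℤ) : ℝ) =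
        -(2 ^ k * (((2 * l + i : ℕ) : ℝ) / 2 ^ (k + 1) - t)) by
          rw [pow_succ']; push_cast; field_simp; ring, abs_neg, abs_mul,
        abs_of_pos (by positivity : (0 : ℝ) < 2 ^ k)]
      field_simp
    rw [h1]
    gcongr
    linarith
  refine (Finset.sum_le_sum fun l hl =>
    h.abs_dyadicDiff_le_fine hη hη1 hc hkm (Finset.mem_range.1 hl)).trans ?_
  rw [← Finset.mul_sum, Finset.sum_add_distrib, Finset.sum_add_distrib, ← Finset.mul_sum]
  calc _ ≤ (2 : ℝ) ^ k * (2 * c / η * (2 ^ ((m : ℝ) / 2) / 2 ^ m)) *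
        (4 * Z + 2 * (4 * Z) + 4 * Z) := by
        gcongr
        · exact hW 0
        · exact hW 1
        · exact hW 2
    _ = _ := by ring

theorem sum_range_abs_dyadicDiff_le_coarse {t : ℝ} {φ : ℝ → ℝ} (h : IsBump η c m t φ)
    (hη : 0 < η) (hη1 : η < 1) (hc : 0 ≤ c)
    (hZ : ∀ (s : Finset ℤ) (y : ℝ), ∑ i ∈ s, (1 + |y - i|) ^ (-(1 + η)) ≤ Z)
    (hkm : m ≤ k) :
    ∑ l ∈ Finset.range (2 ^ k), |dyadicDiff φ k l| ≤
      2 ^ k * (8 * c * Z * (2 ^ ((m : ℝ) / 2) / 2 ^ m * (2 ^ m / 2 ^ k) ^ η)) := by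
  obtain ⟨n, rfl⟩ := Nat.exists_eq_add_of_le hkm
  have hS : ∑ l ∈ Finset.range (2 ^ (m + n)),
      (1 + 2 ^ m * |(l : ℝ) / 2 ^ (m + n) - t|) ^ (-(1 + η)) ≤ 2 ^ n * (4 * Z) := by
    rw [pow_add, sum_range_mul_eq, Finset.sum_comm]
    have inner : ∀ r ∈ Finset.range (2 ^ n), ∑ q ∈ Finset.range (2 ^ m),
        (1 + 2 ^ m * |((q * 2 ^ n + r : ℕ) : ℝ) / 2 ^ (m + n) - t|) ^ (-(1 + η)) ≤ 4 * Z := by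
      intro r hr
      have h1 := sum_decay_le_of_injOn hZ (s := Finset.range (2 ^ m)) (Nat.cast_injective.injOn)
        (2 ^ m * t - r / 2 ^ n)
      have hZ0 : 0 ≤ Z := le_trans (Finset.sum_nonneg fun i _ => by positivity) h1
      refine le_trans (le_of_eq ?_) (h1.trans (by linarith))
      refine Finset.sum_congr rfl fun q _ => ?_
      rw [show 2 ^ m * t - r / 2 ^ n - ((q : ℤ) : ℝ) =
        -(2 ^ m * (((q * 2 ^ n + r : ℕ) : ℝ) / 2 ^ (m + n) - t)) by
          rw [pow_add]; push_cast; field_simp; ring, abs_neg, abs_mul,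
        abs_of_pos (by positivity : (0 : ℝ) < 2 ^ m)]
    have := Finset.sum_le_sum inner
    rw [Finset.sum_const, Finset.card_range, nsmul_eq_mul] at this
    push_cast at this ⊢
    exact this
  refine (Finset.sum_le_sum fun l hl =>
    h.abs_dyadicDiff_le_coarse hη hη1 hc hkm (Finset.mem_range.1 hl)).trans ?_
  rw [← Finset.mul_sum]
  calc _ ≤ 2 * c * 2 ^ ((m : ℝ) / 2) * (2 ^ m / 2 ^ (m + n)) ^ η * (2 ^ n * (4 * Z)) := by gcongr
    _ = _ := by
        have : (2 : ℝ) ^ n = 2 ^ (m + n) / 2 ^ m := by rw [pow_add]; field_simp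
        rw [this]
        ring

end Sums

end IsBump

/-- The square function of the absolute Haar-type coefficients of a series of bumps is bounded on
`L²`, by the Schur test. -/
theorem IsBump.exists_square_function_le {η c : ℝ} (hη : 0 < η) (hη1 : η < 1) (hc : 0 ≤ c) :
    ∃ C : ℝ, 0 ≤ C ∧ ∀ (T : Finset ℕ) (φ : ℕ → ℝ → ℝ) (lev : ℕ → ℕ) (t : ℕ → ℝ) (e : ℕ → ℤ),
      (∀ j ∈ T, IsBump η c (lev j) (t j) (φ j)) →
      (∀ i ∈ T, ∀ j ∈ T, lev i = lev j → e i = e j → i = j) →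
      (∀ j ∈ T, 2 ^ lev j * t j = e j) → ∀ (b : ℕ → ℝ) (K : ℕ),
      ∑ k ∈ Finset.range K, dyadicMean k (fun l => (∑ j ∈ T, b j * |dyadicDiff (φ j) k l|) ^ 2) ≤
        C * ∑ j ∈ T, b j ^ 2 := by
  obtain ⟨Z₁, hZ₁0, hZ₁⟩ := exists_sum_decay_le (ε := η) hη
  obtain ⟨Z₂, hZ₂0, hZ₂⟩ := exists_sum_decay_le (ε := η / 2) (by linarith)
  obtain ⟨W, hW0, hW⟩ := exists_sum_two_rpow_le (ε := η / 4) (by linarith)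
  set R : ℝ := 8 * c / η * Z₂ + 2 * c * Z₁ with hR
  set Q : ℝ := 32 * c / η * Z₁ + 8 * c * Z₁ with hQ
  have hR1 : 0 ≤ 8 * c / η * Z₂ := by positivity
  have hR2 : 0 ≤ 2 * c * Z₁ := by positivity
  have hQ1 : 0 ≤ 32 * c / η * Z₁ := by positivity
  have hQ2 : 0 ≤ 8 * c * Z₁ := by positivity
  refine ⟨R * W * (Q * W), by positivity, fun T φ lev t e h he het b K => ?_⟩
  have two_div : ∀ m k : ℕ, (2 : ℝ) ^ m / 2 ^ k = 2 ^ ((m : ℝ) - k) := fun m k => by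
    rw [Real.rpow_sub (by norm_num), Real.rpow_natCast, Real.rpow_natCast]
  have two_mul_mul : ∀ x y : ℝ, (2 : ℝ) ^ x * 2 ^ y = 2 ^ (x + y) := fun x y =>
    (Real.rpow_add (by norm_num) x y).symm
  have mono : ∀ {x y : ℝ}, x ≤ y → (2 : ℝ) ^ x ≤ 2 ^ y := fun h =>
    Real.rpow_le_rpow_of_exponent_le (by norm_num) h
  have hrow : ∀ k l m : ℕ, l < 2 ^ k →
      ∑ j ∈ T with lev j = m, |dyadicDiff (φ j) k l| * 2 ^ (-(lev j : ℝ) / 2 + η / 4 * lev j) ≤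
        R * 2 ^ (η / 4 * k) * 2 ^ (-(η / 4 * |(k : ℝ) - m|)) := by
    intro k l m hl
    have hS : ∀ j ∈ T.filter (fun j => lev j = m), IsBump η c m (t j) (φ j) := fun j hj => by
      rw [Finset.mem_filter] at hj; rw [← hj.2]; exact h j hj.1
    have heS : InjOn e (T.filter (fun j => lev j = m)) := fun i hi j hj hij => by
      rw [Finset.mem_coe, Finset.mem_filter] at hi hj
      exact he i hi.1 j hj.1 (hi.2.trans hj.2.symm) hij
    have hetS : ∀ j ∈ T.filter (fun j => lev j = m), 2 ^ m * t j = e j := fun j hj => by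
      rw [Finset.mem_filter] at hj; rw [← hj.2]; exact het j hj.1
    have e1 : ∑ j ∈ T with lev j = m,
        |dyadicDiff (φ j) k l| * 2 ^ (-(lev j : ℝ) / 2 + η / 4 * lev j) =
        (∑ j ∈ T with lev j = m, |dyadicDiff (φ j) k l|) * 2 ^ (-(m : ℝ) / 2 + η / 4 * m) := by
      rw [Finset.sum_mul]
      refine Finset.sum_congr rfl fun j hj => ?_
      rw [(Finset.mem_filter.1 hj).2]
    rw [e1, mul_assoc, two_mul_mul]
    rcases le_total k m with hkm | hkm
    · have hkm' : (k : ℝ) ≤ m := by exact_mod_cast hkm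
      have := IsBump.sum_abs_dyadicDiff_le_fine hS hη hη1 hc heS hetS hZ₂ hkm hl
      rw [two_div, ← Real.rpow_mul (by norm_num), two_mul_mul] at this
      refine (mul_le_mul_of_nonneg_right this (by positivity)).trans ?_
      rw [mul_assoc, two_mul_mul, abs_of_nonpos (by linarith)]
      refine mul_le_mul (by rw [hR]; linarith) (mono ?_) (by positivity) (by positivity)
      nlinarith
    · have hkm' : (m : ℝ) ≤ k := by exact_mod_cast hkm
      have := IsBump.sum_abs_dyadicDiff_le_coarse hS hη hη1 hc heS hetS hZ₁ hkm hl
      rw [two_div, ← Real.rpow_mul (by norm_num), two_mul_mul] at this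
      refine (mul_le_mul_of_nonneg_right this (by positivity)).trans ?_
      rw [mul_assoc, two_mul_mul, abs_of_nonneg (by linarith)]
      refine mul_le_mul (by rw [hR]; linarith) (mono ?_) (by positivity) (by positivity)
      nlinarith
  have hcol : ∀ k, ∀ j ∈ T,
      ∑ l ∈ Finset.range (2 ^ k), ((2 : ℝ) ^ k)⁻¹ * |dyadicDiff (φ j) k l| * 2 ^ (η / 4 * k) ≤
        Q * 2 ^ (-(lev j : ℝ) / 2 + η / 4 * lev j) * 2 ^ (-(η / 4 * |(lev j : ℝ) - k|)) := by
    intro k j hj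
    rw [← Finset.sum_mul, ← Finset.mul_sum, mul_assoc Q, two_mul_mul]
    have hk : (0 : ℝ) < 2 ^ k := by positivity
    have hhalf : (2 : ℝ) ^ ((lev j : ℝ) / 2) / 2 ^ lev j = 2 ^ (-(lev j : ℝ) / 2) := by
      rw [← Real.rpow_natCast 2 (lev j), ← Real.rpow_sub (by norm_num)]; ring_nf
    rcases le_total k (lev j) with hkm | hkm
    · have hkm' : (k : ℝ) ≤ lev j := by exact_mod_cast hkm
      have := IsBump.sum_range_abs_dyadicDiff_le_fine (h j hj) hη hη1 hc hZ₁ hkm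
      rw [hhalf, ← inv_mul_le_iff₀ hk] at this
      refine (mul_le_mul_of_nonneg_right this (by positivity)).trans ?_
      rw [mul_assoc, two_mul_mul, abs_of_nonneg (by linarith)]
      refine mul_le_mul (by rw [hQ]; linarith) (mono ?_) (by positivity) (by positivity)
      nlinarith
    · have hkm' : (lev j : ℝ) ≤ k := by exact_mod_cast hkm
      have := IsBump.sum_range_abs_dyadicDiff_le_coarse (h j hj) hη hη1 hc hZ₁ hkm
      rw [hhalf, two_div, ← Real.rpow_mul (by norm_num), two_mul_mul,
        ← inv_mul_le_iff₀ hk] at this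
      refine (mul_le_mul_of_nonneg_right this (by positivity)).trans ?_
      rw [mul_assoc, two_mul_mul, abs_of_nonpos (by linarith)]
      refine mul_le_mul (by rw [hQ]; linarith) (mono ?_) (by positivity) (by positivity)
      nlinarith
  have key := schur_test ((Finset.range K).sigma fun k => Finset.range (2 ^ k)) T
    (d := fun i j => |dyadicDiff (φ j) i.1 i.2|) (μ := fun i => ((2 : ℝ) ^ i.1)⁻¹)
    (w := fun i => 2 ^ (η / 4 * i.1)) (w' := fun j => 2 ^ (-(lev j : ℝ) / 2 + η / 4 * lev j))
    (b := b) (C₁ := R * W) (C₂ := Q * W) (fun _ _ _ _ => abs_nonneg _) (fun _ _ => by positivity)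
    (by positivity) (fun _ _ => by positivity) ?_ ?_
  · refine le_trans (le_of_eq ?_) key
    rw [Finset.sum_sigma]
    refine Finset.sum_congr rfl fun k _ => ?_
    rw [dyadicMean, div_eq_inv_mul, Finset.mul_sum]
  · rintro ⟨k, l⟩ hi
    have hl : l < 2 ^ k := by simpa using (Finset.mem_sigma.1 hi).2
    rw [← Finset.sum_fiberwise_of_maps_to (t := T.image lev)
      (fun j hj => Finset.mem_image_of_mem lev hj)]
    refine (Finset.sum_le_sum fun m _ => hrow k l m hl).trans ?_
    rw [← Finset.mul_sum]
    refine (mul_le_mul_of_nonneg_left (hW _ k) (by positivity)).trans (le_of_eq ?_)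
    ring
  · intro j hj
    rw [Finset.sum_sigma]
    refine (Finset.sum_le_sum fun k _ => hcol k j hj).trans ?_
    rw [← Finset.mul_sum]
    refine (mul_le_mul_of_nonneg_left (hW _ (lev j)) (by positivity)).trans (le_of_eq ?_)
    ring

theorem dyadic_succ_div_mem_Icc {k l : ℕ} (hl : l < 2 ^ k) :
    ((l : ℝ) + 1) / 2 ^ k ∈ Icc (0 : ℝ) 1 := by
  simpa using dyadic_div_mem_Icc (k := k) (l := l + 1) hl

theorem dyadicAvg_eq_average {φ : ℝ → ℝ} (hφ : ContinuousOn φ (Icc 0 1)) {k l : ℕ}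
    (hl : l < 2 ^ k) :
    dyadicAvg φ k l = (dyadicAvg φ (k + 1) (2 * l) + dyadicAvg φ (k + 1) (2 * l + 1)) / 2 := by
  have hpow : 2 ^ (k + 1) = 2 * 2 ^ k := pow_succ' 2 k
  have m0 := dyadic_div_mem_Icc (k := k + 1) (l := 2 * l) (by omega)
  have m1 := dyadic_div_mem_Icc (k := k + 1) (l := 2 * l + 1) (by omega)
  have m2 := dyadic_div_mem_Icc (k := k + 1) (l := 2 * l + 2) (by omega)
  have hadd := intervalIntegral.integral_add_adjacent_intervals
    (hφ.intervalIntegrable_of_mem_Icc m0 m1) (hφ.intervalIntegrable_of_mem_Icc m1 m2)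
  have e0 : ((2 * l : ℕ) : ℝ) / 2 ^ (k + 1) = (l : ℝ) / 2 ^ k := by
    rw [pow_succ']; push_cast; field_simp
  have e2 : ((2 * l + 2 : ℕ) : ℝ) / 2 ^ (k + 1) = ((l : ℝ) + 1) / 2 ^ k := by
    rw [pow_succ']; push_cast; field_simp
  have e3 : ((2 * l + 1 : ℕ) : ℝ) + 1 = ((2 * l + 2 : ℕ) : ℝ) := by push_cast; ring
  have e4 : ((2 * l : ℕ) : ℝ) + 1 = ((2 * l + 1 : ℕ) : ℝ) := by push_cast; ring
  rw [dyadicAvg, dyadicAvg, dyadicAvg, e3, e4, ← e0, ← e2, ← hadd, pow_succ]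
  ring

theorem dyadicAvg_sum {T : Finset ℕ} {φ : ℕ → ℝ → ℝ}
    (hφ : ∀ j ∈ T, ContinuousOn (φ j) (Icc 0 1)) (b : ℕ → ℝ) {k l : ℕ} (hl : l < 2 ^ k) :
    dyadicAvg (fun x => ∑ j ∈ T, b j * φ j x) k l = ∑ j ∈ T, b j * dyadicAvg (φ j) k l := by
  simp only [dyadicAvg]
  rw [intervalIntegral.integral_finsetSum fun j hj =>
    ((hφ j hj).intervalIntegrable_of_mem_Icc (dyadic_div_mem_Icc hl.le)
      (dyadic_succ_div_mem_Icc hl)).const_mul _, Finset.mul_sum]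
  refine Finset.sum_congr rfl fun j _ => ?_
  rw [intervalIntegral.integral_const_mul]
  ring

theorem dyadicDiff_sum {T : Finset ℕ} {φ : ℕ → ℝ → ℝ}
    (hφ : ∀ j ∈ T, ContinuousOn (φ j) (Icc 0 1)) (b : ℕ → ℝ) {k l : ℕ} (hl : l < 2 ^ k) :
    dyadicDiff (fun x => ∑ j ∈ T, b j * φ j x) k l = ∑ j ∈ T, b j * dyadicDiff (φ j) k l := by
  have hpow : 2 ^ (k + 1) = 2 * 2 ^ k := pow_succ' 2 k
  rw [dyadicDiff, dyadicAvg_sum hφ b (by omega), dyadicAvg_sum hφ b (by omega),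
    ← Finset.sum_sub_distrib, Finset.sum_div]
  refine Finset.sum_congr rfl fun j _ => ?_
  rw [dyadicDiff]
  ring

theorem abs_dyadicAvg_sub_le {φ : ℝ → ℝ} (hφ : ContinuousOn φ (Icc 0 1)) {k l : ℕ}
    (hl : l < 2 ^ k) {a ε : ℝ}
    (h : ∀ y ∈ Icc ((l : ℝ) / 2 ^ k) (((l : ℝ) + 1) / 2 ^ k), |φ y - a| ≤ ε) :
    |dyadicAvg φ k l - a| ≤ ε := by
  have hk : (0 : ℝ) < 2 ^ k := by positivity
  have hle : (l : ℝ) / 2 ^ k ≤ ((l : ℝ) + 1) / 2 ^ k := by gcongr; linarith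
  have hlen : ((l : ℝ) + 1) / 2 ^ k - (l : ℝ) / 2 ^ k = 1 / 2 ^ k := by ring
  have hsub : dyadicAvg φ k l - a =
      2 ^ k * ∫ x in ((l : ℝ) / 2 ^ k)..(((l : ℝ) + 1) / 2 ^ k), (φ x - a) := by
    rw [intervalIntegral.integral_sub (hφ.intervalIntegrable_of_mem_Icc
      (dyadic_div_mem_Icc hl.le) (dyadic_succ_div_mem_Icc hl)) intervalIntegrable_const,
      intervalIntegral.integral_const, hlen, dyadicAvg, smul_eq_mul]
    field_simp
  have hb := intervalIntegral.norm_integral_le_of_norm_le_const (a := (l : ℝ) / 2 ^ k)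
    (b := ((l : ℝ) + 1) / 2 ^ k) (f := fun x => φ x - a) (C := ε) fun x hx => by
      rw [uIoc_of_le hle] at hx
      exact h x (Ioc_subset_Icc_self hx)
  rw [hlen, abs_of_pos (by positivity), Real.norm_eq_abs] at hb
  rw [hsub, abs_mul, abs_of_pos hk]
  calc _ ≤ 2 ^ k * (ε * (1 / 2 ^ k)) := by gcongr
    _ = ε := by field_simp

theorem floor_two_pow_mul_lt {x : ℝ} (hx : x ∈ Ico (0 : ℝ) 1) (k : ℕ) :
    ⌊2 ^ k * x⌋₊ < 2 ^ k := by
  have h0 : 0 ≤ x := hx.1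
  rw [Nat.floor_lt (by positivity)]
  push_cast
  have : (0 : ℝ) < 2 ^ k := by positivity
  nlinarith [hx.2]

theorem tendsto_dyadicAvg {φ : ℝ → ℝ} (hφ : ContinuousOn φ (Icc 0 1)) {x : ℝ}
    (hx : x ∈ Ico (0 : ℝ) 1) :
    Filter.Tendsto (fun k : ℕ => dyadicAvg φ k ⌊2 ^ k * x⌋₊) Filter.atTop (nhds (φ x)) := by
  rw [Metric.tendsto_atTop]
  intro ε hε
  obtain ⟨δ, hδ, hd⟩ := Metric.continuousOn_iff.1 hφ x (Ico_subset_Icc_self hx) (ε / 2) (by linarith)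
  obtain ⟨N, hN⟩ := exists_pow_lt_of_lt_one hδ (by norm_num : (1 / 2 : ℝ) < 1)
  refine ⟨N, fun k hk => ?_⟩
  have hl := floor_two_pow_mul_lt hx k
  have hk0 : (0 : ℝ) < 2 ^ k := by positivity
  have h0 : 0 ≤ x := hx.1
  refine lt_of_le_of_lt (abs_dyadicAvg_sub_le hφ hl (ε := ε / 2) fun y hy => ?_) (by linarith)
  have hy01 : y ∈ Icc (0 : ℝ) 1 :=
    ⟨(dyadic_div_mem_Icc hl.le).1.trans hy.1, hy.2.trans (dyadic_succ_div_mem_Icc hl).2⟩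
  have hfl : (⌊2 ^ k * x⌋₊ : ℝ) / 2 ^ k ≤ x := by
    rw [div_le_iff₀ hk0, mul_comm x]; exact Nat.floor_le (by positivity)
  have hfu : x < ((⌊2 ^ k * x⌋₊ : ℝ) + 1) / 2 ^ k := by
    rw [lt_div_iff₀ hk0, mul_comm x]; exact Nat.lt_floor_add_one _
  have hlen : ((⌊2 ^ k * x⌋₊ : ℝ) + 1) / 2 ^ k - (⌊2 ^ k * x⌋₊ : ℝ) / 2 ^ k = (1 / 2) ^ k := by
    rw [one_div, inv_pow]; ring
  have hpow : (1 / 2 : ℝ) ^ k ≤ (1 / 2) ^ N :=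
    pow_le_pow_of_le_one (by norm_num) (by norm_num) hk
  refine (hd y hy01 ?_).le
  rw [Real.dist_eq, abs_lt]
  constructor <;> linarith [hy.1, hy.2]

theorem lintegral_comp_floor (K : ℕ) (F : ℕ → ENNReal) :
    ∫⁻ x in Ico (0 : ℝ) 1, F ⌊2 ^ K * x⌋₊ =
      ∑ l ∈ Finset.range (2 ^ K), F l * ENNReal.ofReal (1 / 2 ^ K) := by
  have hK : (0 : ℝ) < 2 ^ K := by positivity
  have hmem : ∀ (l : ℕ) (x : ℝ), x ∈ Ico ((l : ℝ) / 2 ^ K) (((l : ℝ) + 1) / 2 ^ K) →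
      ⌊2 ^ K * x⌋₊ = l := by
    intro l x hx
    have h1 : (l : ℝ) ≤ 2 ^ K * x := by rw [mul_comm, ← div_le_iff₀ hK]; exact hx.1
    have h2 : 2 ^ K * x < (l : ℝ) + 1 := by rw [mul_comm, ← lt_div_iff₀ hK]; exact hx.2
    exact (Nat.floor_eq_iff (le_trans (by positivity) h1)).2 ⟨h1, h2⟩
  have hunion : Ico (0 : ℝ) 1 =
      ⋃ l ∈ Finset.range (2 ^ K), Ico ((l : ℝ) / 2 ^ K) (((l : ℝ) + 1) / 2 ^ K) := by
    ext x
    simp only [mem_iUnion, Finset.mem_range, exists_prop]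
    constructor
    · intro hx
      have h0 : 0 ≤ x := hx.1
      refine ⟨⌊2 ^ K * x⌋₊, floor_two_pow_mul_lt hx K, ?_, ?_⟩
      · rw [div_le_iff₀ hK, mul_comm x]; exact Nat.floor_le (by positivity)
      · rw [lt_div_iff₀ hK, mul_comm x]; exact Nat.lt_floor_add_one _
    · rintro ⟨l, hl, hx⟩
      exact ⟨(dyadic_div_mem_Icc hl.le).1.trans hx.1,
        hx.2.trans_le (dyadic_succ_div_mem_Icc hl).2⟩
  rw [hunion, lintegral_biUnion_finset]
  · refine Finset.sum_congr rfl fun l _ => ?_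
    rw [setLIntegral_congr_fun measurableSet_Ico (g := fun _ => F l)
      fun x hx => by simp only [hmem l x hx], setLIntegral_const, Real.volume_Ico]
    congr 2
    ring
  · intro i _ j _ hij
    exact Set.disjoint_left.2 fun x hi hj => hij ((hmem i x hi).symm.trans (hmem j x hj))
  · exact fun _ _ => measurableSet_Ico

theorem lintegral_iSup_sq_le {ι : Type*} {r : ℕ} (hr : 1 ≤ r) (s : Finset ι)
    (hs : s.card ≤ 2 ^ (r + 1)) {f : ι → ℝ → ℝ} {g : ℕ → ℕ → ℝ}
    (hf : ∀ i ∈ s, ContinuousOn (f i) (Icc 0 1)) (hf0 : ∀ i ∈ s, ∫ x in (0 : ℝ)..1, f i x = 0)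
    (hd : ∀ i ∈ s, ∀ k l, l < 2 ^ k → |dyadicDiff (f i) k l| ≤ g k l) {B : ℝ}
    (hB : ∀ K, ∑ k ∈ Finset.range K, dyadicMean k (fun l => g k l ^ 2) ≤ B) :
    ∫⁻ x in Ico (0 : ℝ) 1, ⨆ i ∈ s, ENNReal.ofReal (f i x ^ 2) ≤
      ENNReal.ofReal (44 * (r + 1) * B) := by
  set F : ℕ → ℕ → ENNReal := fun K l => ⨆ i ∈ s, ENNReal.ofReal (dyadicAvg (f i) K l ^ 2) with hF
  have hstep : ∀ K, ∫⁻ x in Ico (0 : ℝ) 1, F K ⌊2 ^ K * x⌋₊ ≤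
      ENNReal.ofReal (44 * (r + 1) * B) := by
    intro K
    have hex : ∀ l, ∃ y : ℝ, (y = 0 ∨ ∃ i ∈ s, y = dyadicAvg (f i) K l ^ 2) ∧
        F K l = ENNReal.ofReal y := by
      intro l
      rcases s.eq_empty_or_nonempty with rfl | hne
      · exact ⟨0, Or.inl rfl, by simp [hF]⟩
      · obtain ⟨i, hi, hmax⟩ := s.exists_max_image (fun i => dyadicAvg (f i) K l ^ 2) hne
        exact ⟨_, Or.inr ⟨i, hi, rfl⟩, le_antisymm
          (iSup₂_le fun j hj => ENNReal.ofReal_le_ofReal (hmax j hj))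
          (le_iSup₂ (f := fun i _ => ENNReal.ofReal (dyadicAvg (f i) K l ^ 2)) i hi)⟩
    choose mx hmx hFmx using hex
    have hmx0 : ∀ l, 0 ≤ mx l := fun l => by
      rcases hmx l with h | ⟨i, _, h⟩ <;> rw [h]
      positivity
    have hmean := dyadicMean_max_sq_le hr s hs (v := fun i k l => dyadicAvg (f i) k l) (g := g)
      (fun i hi => by simp [dyadicAvg, hf0 i hi])
      (fun i hi k l hl => dyadicAvg_eq_average (hf i hi) hl) hd K (mx := mx)
      (fun l _ => hmx l) (hB K)
    rw [lintegral_comp_floor]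
    refine le_trans (le_of_eq ?_) (ENNReal.ofReal_le_ofReal hmean)
    rw [dyadicMean, Finset.sum_div, ENNReal.ofReal_sum_of_nonneg fun l _ =>
      div_nonneg (hmx0 l) (by positivity)]
    refine Finset.sum_congr rfl fun l _ => ?_
    rw [hFmx, ← ENNReal.ofReal_mul (hmx0 l), mul_one_div]
  calc _ ≤ ∫⁻ x in Ico (0 : ℝ) 1, Filter.liminf (fun K => F K ⌊2 ^ K * x⌋₊) Filter.atTop := by
        refine setLIntegral_mono' measurableSet_Ico fun x hx => iSup₂_le fun i hi => ?_
        have hlim : Filter.Tendsto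
            (fun K : ℕ => ENNReal.ofReal (dyadicAvg (f i) K ⌊2 ^ K * x⌋₊ ^ 2)) Filter.atTop
            (nhds (ENNReal.ofReal (f i x ^ 2))) :=
          ENNReal.tendsto_ofReal ((tendsto_dyadicAvg (hf i hi) hx).pow 2)
        rw [← hlim.liminf_eq]
        exact Filter.liminf_le_liminf (Filter.Eventually.of_forall fun K =>
          le_iSup₂ (f := fun i _ => ENNReal.ofReal (dyadicAvg (f i) K ⌊2 ^ K * x⌋₊ ^ 2)) i hi)
    _ ≤ Filter.liminf (fun K => ∫⁻ x in Ico (0 : ℝ) 1, F K ⌊2 ^ K * x⌋₊) Filter.atTop :=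
        lintegral_liminf_le fun K => (measurable_from_nat (f := F K)).comp
          (Nat.measurable_floor.comp (by fun_prop))
    _ ≤ _ := by
        refine Filter.liminf_le_of_frequently_le' (Filter.Frequently.of_forall hstep)

/-- The integer `2 ^ m * t_j`, where `m` is the level of the index `j`. -/
def centerIndex (j : ℕ) : ℤ := 2 * j - 2 ^ Nat.clog 2 j - 1

theorem two_pow_mul_tpt {j : ℕ} (hj : 2 ≤ j) :
    2 ^ Nat.clog 2 j * tpt (Nat.clog 2 j) j = centerIndex j := by
  have hm : Nat.clog 2 j = Nat.clog 2 j - 1 + 1 :=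
    (Nat.sub_add_cancel (Nat.clog_pos (by norm_num) hj)).symm
  rw [tpt, centerIndex]
  push_cast
  rw [mul_div_cancel₀ _ (by positivity)]
  have : (2 : ℝ) ^ Nat.clog 2 j = 2 * 2 ^ (Nat.clog 2 j - 1) := by
    conv_lhs => rw [hm, pow_succ']
  rw [this]
  ring

theorem mem_Ioc_clog {j : ℕ} (hj : 2 ≤ j) :
    j ∈ Finset.Ioc (2 ^ (Nat.clog 2 j - 1)) (2 ^ Nat.clog 2 j) :=
  Finset.mem_Ioc.2 ⟨Nat.pow_pred_clog_lt_self (by norm_num) hj, Nat.le_pow_clog (by norm_num) j⟩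

theorem WaveletHolder.continuousOn {δ α c : ℝ} {φ : ℕ → ℝ → ℝ} (h : WaveletHolder δ α c φ)
    (hα : 0 < α) {j : ℕ} (hj : 2 ≤ j) : ContinuousOn (φ j) (Icc 0 1) := by
  intro t ht
  set m := Nat.clog 2 j
  have hholder := h m (Nat.clog_pos (by norm_num) hj) j (mem_Ioc_clog hj) t ht
  have hlim : Filter.Tendsto (fun t' : ℝ => c * 2 ^ ((m : ℝ) / 2) * (2 ^ m * |t - t'|) ^ α *
      xi δ (2 ^ m * (t - tpt m j))) (nhdsWithin t (Icc 0 1)) (nhds 0) := by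
    have hcont : Continuous fun t' : ℝ => c * 2 ^ ((m : ℝ) / 2) * (2 ^ m * |t - t'|) ^ α *
        xi δ (2 ^ m * (t - tpt m j)) :=
      (continuous_const.mul (Continuous.rpow_const (by fun_prop) fun _ => Or.inr hα.le)).mul
        continuous_const
    have := hcont.tendsto t
    rw [sub_self, abs_zero, mul_zero, Real.zero_rpow hα.ne', mul_zero, zero_mul] at this
    exact this.mono_left nhdsWithin_le_nhds
  rw [ContinuousWithinAt, tendsto_iff_dist_tendsto_zero]
  refine squeeze_zero' (Filter.Eventually.of_forall fun _ => dist_nonneg) ?_ hlim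
  have hball : ∀ᶠ t' in nhdsWithin t (Icc (0 : ℝ) 1), |t - t'| ≤ ((2 : ℝ) ^ m)⁻¹ := by
    filter_upwards [mem_nhdsWithin_of_mem_nhds
      (Metric.closedBall_mem_nhds t (ε := ((2 : ℝ) ^ m)⁻¹) (by positivity))] with t' ht'
    rwa [Metric.mem_closedBall, dist_comm, Real.dist_eq] at ht'
  filter_upwards [hball, self_mem_nhdsWithin] with t' hb ht'
  rw [dist_comm, Real.dist_eq]
  exact hholder t' ht' hb

theorem integral_Ioo_eq_intervalIntegral (f : ℝ → ℝ) :
    ∫ x in Ioo (0 : ℝ) 1, f x = ∫ x in (0 : ℝ)..1, f x := by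
  rw [intervalIntegral.integral_of_le zero_le_one, integral_Ioc_eq_integral_Ioo]

theorem IsWaveletSystem.isBump {δ α c : ℝ} (hδ : 0 < δ) (hα : 0 < α)
    (hc : 0 ≤ c) {φ : ℕ → ℝ → ℝ} (h : IsWaveletSystem δ α c φ) {j : ℕ} (hj : 2 ≤ j) :
    IsBump (min δ α) c (Nat.clog 2 j) (tpt (Nat.clog 2 j) j) (φ j) := by
  obtain ⟨-, -, hmean, hdecay, hholder⟩ := h
  have hm : 1 ≤ Nat.clog 2 j := Nat.clog_pos (by norm_num) hj
  have hη : 0 < min δ α := lt_min hδ hα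
  have hxi : ∀ x t : ℝ, xi δ (2 ^ Nat.clog 2 j * (x - t)) ≤
      (1 + 2 ^ Nat.clog 2 j * |x - t|) ^ (-(1 + min δ α)) := by
    intro x t
    have habs := abs_nonneg (x - t)
    rw [xi, abs_mul, abs_of_pos (by positivity : (0 : ℝ) < 2 ^ Nat.clog 2 j)]
    refine Real.rpow_le_rpow_of_exponent_le (le_add_of_nonneg_right (by positivity)) ?_
    linarith [min_le_left δ α]
  refine ⟨hholder.continuousOn hα hj, ?_, fun x hx => ?_, fun x hx y hy hxy => ?_⟩
  · rw [← integral_Ioo_eq_intervalIntegral]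
    exact hmean j (by omega)
  · exact (hdecay _ hm j (mem_Ioc_clog hj) x hx).trans
      (mul_le_mul_of_nonneg_left (hxi _ _) (by positivity))
  · refine (hholder _ hm j (mem_Ioc_clog hj) x hx y hy hxy).trans ?_
    have h1 : 2 ^ Nat.clog 2 j * |x - y| ≤ (1 : ℝ) := by
      rw [← le_inv_mul_iff₀ (by positivity), mul_one]; exact hxy
    have hpow : (2 ^ Nat.clog 2 j * |x - y|) ^ α ≤
        (2 ^ Nat.clog 2 j * |x - y| : ℝ) ^ min δ α :=
      Real.rpow_le_rpow_of_exponent_ge' (by positivity) h1 hη.le (min_le_right _ _)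
    have hxi0 : 0 ≤ xi δ (2 ^ Nat.clog 2 j * (x - tpt (Nat.clog 2 j) j)) := by
      rw [xi]; positivity
    exact mul_le_mul (mul_le_mul_of_nonneg_left hpow (by positivity)) (hxi _ _) hxi0
      (by positivity)

/-- The maximal inequality for partial sums of a wavelet-type series over `2 ^ (r + 1)` arbitrary
sets of indices. -/
theorem IsWaveletSystem.exists_lintegral_iSup_sq_le {δ α c : ℝ} (hδ : 0 < δ) (hδ1 : δ < 1)
    (hα : 0 < α) (hc : 0 ≤ c) {φ : ℕ → ℝ → ℝ} (h : IsWaveletSystem δ α c φ) :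
    ∃ C : ℝ, 0 ≤ C ∧ ∀ (r : ℕ), 1 ≤ r → ∀ s : Finset ℕ, s.card ≤ 2 ^ (r + 1) →
      ∀ T : Finset ℕ, (∀ j ∈ T, 2 ≤ j) → ∀ U : ℕ → Finset ℕ, (∀ i ∈ s, U i ⊆ T) → ∀ b : ℕ → ℝ,
      ∫⁻ x in Ico (0 : ℝ) 1, ⨆ i ∈ s, ENNReal.ofReal ((∑ j ∈ U i, b j * φ j x) ^ 2) ≤
        ENNReal.ofReal (C * (r + 1) * ∑ j ∈ T, b j ^ 2) := by
  obtain ⟨C, hC, hsq⟩ := IsBump.exists_square_function_le (η := min δ α) (c := c)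
    (lt_min hδ hα) (min_lt_of_left_lt hδ1) hc
  refine ⟨44 * C, by positivity, fun r hr s hs T hT U hU b => ?_⟩
  have hbump : ∀ j ∈ T, IsBump (min δ α) c (Nat.clog 2 j) (tpt (Nat.clog 2 j) j) (φ j) :=
    fun j hj => h.isBump hδ hα hc (hT j hj)
  have hcont : ∀ j ∈ T, ContinuousOn (φ j) (Icc 0 1) := fun j hj => (hbump j hj).continuousOn
  have hB := hsq T φ (Nat.clog 2) (fun j => tpt (Nat.clog 2 j) j) centerIndex hbump
    (fun i _ j _ hlev he => by
      simp only [centerIndex, hlev] at he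
      omega)
    (fun j hj => two_pow_mul_tpt (hT j hj)) (fun j => |b j|)
  simp only [sq_abs] at hB
  refine (lintegral_iSup_sq_le hr s hs (f := fun i x => ∑ j ∈ U i, b j * φ j x)
    (fun i hi => continuousOn_finsetSum _ fun j hj =>
      continuousOn_const.mul (hcont j (hU i hi hj))) (fun i hi => ?_) (fun i hi k l hl => ?_)
    hB).trans (ENNReal.ofReal_le_ofReal (le_of_eq (by ring)))
  · rw [intervalIntegral.integral_finsetSum fun j hj =>
      ((hcont j (hU i hi hj)).intervalIntegrable_of_mem_Icc (by simp) (by simp)).const_mul _]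
    refine Finset.sum_eq_zero fun j hj => ?_
    rw [intervalIntegral.integral_const_mul, (hbump j (hU i hi hj)).integral_eq_zero, mul_zero]
  · rw [dyadicDiff_sum (fun j hj => hcont j (hU i hi hj)) b hl]
    refine (Finset.abs_sum_le_sum_abs _ _).trans ?_
    simp only [abs_mul]
    exact Finset.sum_le_sum_of_subset_of_nonneg (hU i hi) fun j _ _ => by positivity

theorem ae_tsum_ne_top_of_lintegral_le {X : Type*} [MeasurableSpace X] {μ : Measure X}
    {F : ℕ → X → ENNReal} (hF : ∀ k, Measurable (F k)) {β : ℕ → ℝ} (hβ : Summable β)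
    (h : ∀ k, ∫⁻ x, F k x ∂μ ≤ ENNReal.ofReal (β k)) : ∀ᵐ x ∂μ, ∑' k, F k x ≠ ⊤ := by
  have hlt := ae_lt_top' (f := fun x => ∑' k, F k x)
    (AEMeasurable.tsum fun k => (hF k).aemeasurable) (μ := μ) (by
      rw [lintegral_tsum fun k => (hF k).aemeasurable]
      exact ne_top_of_le_ne_top hβ.tsum_ofReal_ne_top (ENNReal.tsum_le_tsum h))
  exact hlt.mono fun x hx => hx.ne

theorem le_two_pow_two_pow_log_log {N : ℕ} (hN : 2 ≤ N) :
    2 ^ 2 ^ Nat.log 2 (Nat.log 2 N) ≤ N ∧ N < 2 ^ 2 ^ (Nat.log 2 (Nat.log 2 N) + 1) := by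
  have hlog : Nat.log 2 N ≠ 0 := (Nat.log_pos (by norm_num) hN).ne'
  constructor
  · exact (Nat.pow_le_pow_right (by norm_num) (Nat.pow_log_le_self 2 hlog)).trans
      (Nat.pow_log_le_self 2 (by omega))
  · exact (Nat.lt_pow_succ_log_self (by norm_num) N).trans_le
      (Nat.pow_le_pow_right (by norm_num) (Nat.lt_pow_succ_log_self (by norm_num) _))

theorem tendsto_log_log_atTop :
    Filter.Tendsto (fun N => Nat.log 2 (Nat.log 2 N)) Filter.atTop Filter.atTop := by
  refine Filter.tendsto_atTop.2 fun b => ?_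
  filter_upwards [Filter.eventually_ge_atTop (2 ^ 2 ^ b)] with N hN
  exact Nat.le_log_of_pow_le (by norm_num) (Nat.le_log_of_pow_le (by norm_num) hN)

/-- If a sequence has summable weighted squared increments along `2 ^ 2 ^ k` and its oscillation
between consecutive terms of this subsequence tends to zero, then it converges. -/
theorem exists_tendsto_of_lacunary {S : ℕ → ℝ}
    (hinc : Summable fun k : ℕ => 2 ^ k * (S (2 ^ 2 ^ (k + 1)) - S (2 ^ 2 ^ k)) ^ 2)
    {M : ℕ → ENNReal} (hM : Filter.Tendsto M Filter.atTop (nhds 0))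
    (hosc : ∀ k, ∀ N ∈ Finset.Icc (2 ^ 2 ^ k) (2 ^ 2 ^ (k + 1)),
      ENNReal.ofReal ((S N - S (2 ^ 2 ^ k)) ^ 2) ≤ M k) :
    ∃ L, Filter.Tendsto S Filter.atTop (nhds L) := by
  have hsum : Summable fun k : ℕ => S (2 ^ 2 ^ (k + 1)) - S (2 ^ 2 ^ k) := by
    refine Summable.of_norm_bounded
      ((summable_geometric_of_lt_one (by norm_num) (by norm_num : (1 / 2 : ℝ) < 1)).add hinc)
      fun k => ?_
    rw [Real.norm_eq_abs]
    set D := S (2 ^ 2 ^ (k + 1)) - S (2 ^ 2 ^ k)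
    have h2 : (0 : ℝ) < 2 ^ k := by positivity
    have hinv : (1 / 2 : ℝ) ^ k * 2 ^ k = 1 := by rw [← mul_pow]; norm_num
    have hq : (0 : ℝ) < (1 / 2) ^ k := by positivity
    rw [← sq_abs D]
    nlinarith [sq_nonneg ((1 / 2 : ℝ) ^ k - |D|), sq_nonneg ((1 / 2 : ℝ) ^ k + |D|), abs_nonneg D,
      mul_nonneg h2.le (sq_nonneg (|D| - (1 / 2 : ℝ) ^ k))]
  obtain ⟨L, hL⟩ : ∃ L, Filter.Tendsto (fun k => S (2 ^ 2 ^ k)) Filter.atTop (nhds L) := by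
    have := hsum.hasSum.tendsto_sum_nat
    simp only [Finset.sum_range_sub fun k => S (2 ^ 2 ^ k)] at this
    exact ⟨_, (this.add_const (S (2 ^ 2 ^ 0))).congr fun k => sub_add_cancel _ _⟩
  refine ⟨L, ?_⟩
  have hdiff : Filter.Tendsto (fun N => S N - S (2 ^ 2 ^ Nat.log 2 (Nat.log 2 N))) Filter.atTop
      (nhds 0) := by
    have h1 : Filter.Tendsto
        (fun N => ENNReal.ofReal ((S N - S (2 ^ 2 ^ Nat.log 2 (Nat.log 2 N))) ^ 2)) Filter.atTop
        (nhds 0) := by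
      refine tendsto_of_tendsto_of_tendsto_of_le_of_le' tendsto_const_nhds
        (hM.comp tendsto_log_log_atTop) (Filter.Eventually.of_forall fun _ => zero_le) ?_
      filter_upwards [Filter.eventually_ge_atTop 2] with N hN
      obtain ⟨h1, h2⟩ := le_two_pow_two_pow_log_log hN
      exact hosc _ N (Finset.mem_Icc.2 ⟨h1, h2.le⟩)
    have h2 := (ENNReal.tendsto_toReal ENNReal.zero_ne_top).comp h1
    have h3 : Filter.Tendsto (fun N => √((S N - S (2 ^ 2 ^ Nat.log 2 (Nat.log 2 N))) ^ 2))
        Filter.atTop (nhds 0) := by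
      have := (Real.continuous_sqrt.tendsto _).comp h2
      simpa [Function.comp_def, ENNReal.toReal_ofReal (sq_nonneg _)] using this
    simp only [Real.sqrt_sq_eq_abs] at h3
    exact (tendsto_zero_iff_abs_tendsto_zero _).2 h3
  simpa using hdiff.add (hL.comp tendsto_log_log_atTop)

/-- Grouping a summable sequence with logarithmic weights into the blocks `[2 ^ 2 ^ k, 2 ^ 2 ^ (k + 1))`. -/
theorem summable_two_pow_mul_sum_Ico {A : ℕ → ℝ} (hA : ∀ n, 0 ≤ A n)
    (h : Summable fun n : ℕ => A n * Real.log (n + 1)) :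
    Summable fun k : ℕ => 2 ^ (k + 1) * ∑ n ∈ Finset.Ico (2 ^ 2 ^ k) (2 ^ 2 ^ (k + 1)), A n := by
  have hlog0 : ∀ n : ℕ, 0 ≤ Real.log ((n : ℝ) + 1) := fun n =>
    Real.log_nonneg (by linarith [Nat.cast_nonneg (α := ℝ) n])
  have hmono : ∀ k : ℕ, 2 ^ 2 ^ k ≤ 2 ^ 2 ^ (k + 1) := fun k =>
    Nat.pow_le_pow_right (by norm_num) (Nat.pow_le_pow_right (by norm_num) (Nat.le_succ k))
  have hblocks : Summable fun k : ℕ =>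
      ∑ n ∈ Finset.Ico (2 ^ 2 ^ k) (2 ^ 2 ^ (k + 1)), A n * Real.log (n + 1) := by
    refine summable_of_sum_range_le (c := ∑' n : ℕ, A n * Real.log (n + 1))
      (fun k => Finset.sum_nonneg fun n _ => mul_nonneg (hA n) (hlog0 n)) fun K => ?_
    have heq : ∑ k ∈ Finset.range K,
        ∑ n ∈ Finset.Ico (2 ^ 2 ^ k) (2 ^ 2 ^ (k + 1)), A n * Real.log ((n : ℝ) + 1) =
        ∑ n ∈ Finset.Ico (2 ^ 2 ^ 0) (2 ^ 2 ^ K), A n * Real.log ((n : ℝ) + 1) := by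
      induction K with
      | zero => simp
      | succ K ih =>
        rw [Finset.sum_range_succ, ih, Finset.sum_Ico_consecutive _
          (Nat.pow_le_pow_right (by norm_num) (Nat.pow_le_pow_right (by norm_num) K.zero_le))
          (hmono K)]
    rw [heq]
    exact h.sum_le_tsum _ fun n _ => mul_nonneg (hA n) (hlog0 n)
  refine Summable.of_nonneg_of_le
    (fun k => mul_nonneg (by positivity) (Finset.sum_nonneg fun n _ => hA n)) (fun k => ?_)
    (hblocks.mul_left (2 / Real.log 2))
  rw [Finset.mul_sum, Finset.mul_sum]
  refine Finset.sum_le_sum fun n hn => ?_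
  have hn' : (2 : ℝ) ^ 2 ^ k ≤ n := by exact_mod_cast (Finset.mem_Ico.1 hn).1
  have hl2 : 0 < Real.log 2 := Real.log_pos (by norm_num)
  have hle : (2 : ℝ) ^ k * Real.log 2 ≤ Real.log (n + 1) := by
    have := Real.log_le_log (by positivity) (hn'.trans (by linarith : (n : ℝ) ≤ n + 1))
    rw [Real.log_pow] at this
    exact_mod_cast this
  calc (2 : ℝ) ^ (k + 1) * A n = 2 / Real.log 2 * (A n * (2 ^ k * Real.log 2)) := by
        field_simp; ring
    _ ≤ 2 / Real.log 2 * (A n * Real.log (n + 1)) := by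
        have := hA n
        gcongr

/-- Almost everywhere convergence of wavelet-type series with a logarithmic Weyl multiplier. -/
theorem IsWaveletSystem.ae_exists_tendsto {δ α c : ℝ} (hδ : 0 < δ) (hδ1 : δ < 1) (hα : 0 < α)
    (hc : 0 ≤ c) {φ : ℕ → ℝ → ℝ} (h : IsWaveletSystem δ α c φ) {G : ℕ → Finset ℕ}
    (hG : Pairwise fun i j => Disjoint (G i) (G j)) (hG2 : ∀ n, ∀ j ∈ G n, 2 ≤ j) {b : ℕ → ℝ}
    (hb : Summable fun n : ℕ => (∑ j ∈ G n, b j ^ 2) * Real.log (n + 1)) :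
    ∀ᵐ x ∂volume.restrict (Ico (0 : ℝ) 1), ∃ L, Filter.Tendsto
      (fun N => ∑ n ∈ Finset.range N, ∑ j ∈ G n, b j * φ j x) Filter.atTop (nhds L) := by
  obtain ⟨C, hC, hmax⟩ := h.exists_lintegral_iSup_sq_le hδ hδ1 hα hc
  set S : ℝ → ℕ → ℝ := fun x N => ∑ n ∈ Finset.range N, ∑ j ∈ G n, b j * φ j x with hS
  have hφ : ∀ j, Measurable (φ j) := h.1
  have hSm : ∀ N, Measurable fun x => S x N := fun N => by
    simp only [hS]; fun_prop
  have hsub : ∀ {N N' : ℕ}, N ≤ N' → ∀ x,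
      S x N' - S x N = ∑ j ∈ (Finset.Ico N N').biUnion G, b j * φ j x := fun {N N'} hN x => by
    rw [Finset.sum_biUnion fun i _ j _ hij => hG hij, Finset.sum_Ico_eq_sub _ hN]
  have hmono : ∀ k : ℕ, 2 ^ 2 ^ k ≤ 2 ^ 2 ^ (k + 1) := fun k =>
    Nat.pow_le_pow_right (by norm_num) (Nat.pow_le_pow_right (by norm_num) (Nat.le_succ k))
  have hβ := (summable_two_pow_mul_sum_Ico
    (fun n => Finset.sum_nonneg fun j _ => sq_nonneg (b j)) hb).mul_left C
  set T : ℕ → Finset ℕ := fun k => (Finset.Ico (2 ^ 2 ^ k) (2 ^ 2 ^ (k + 1))).biUnion G with hT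
  have hT2 : ∀ k, ∀ j ∈ T k, 2 ≤ j := fun k j hj => by
    obtain ⟨n, -, hn⟩ := Finset.mem_biUnion.1 hj
    exact hG2 n j hn
  have hTsum : ∀ k, ∑ j ∈ T k, b j ^ 2 =
      ∑ n ∈ Finset.Ico (2 ^ 2 ^ k) (2 ^ 2 ^ (k + 1)), ∑ j ∈ G n, b j ^ 2 := fun k =>
    Finset.sum_biUnion fun i _ j _ hij => hG hij
  set M : ℕ → ℝ → ENNReal := fun k x => ⨆ N ∈ Finset.Icc (2 ^ 2 ^ k) (2 ^ 2 ^ (k + 1)),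
    ENNReal.ofReal ((S x N - S x (2 ^ 2 ^ k)) ^ 2) with hM
  have hMm : ∀ k, Measurable (M k) := fun k =>
    Measurable.biSup _ (Finset.countable_toSet _) fun N _ =>
      (((hSm N).sub (hSm _)).pow_const 2).ennreal_ofReal
  have hMint : ∀ k, ∫⁻ x in Ico (0 : ℝ) 1, M k x ≤ ENNReal.ofReal (C * (2 ^ (k + 1) *
      ∑ n ∈ Finset.Ico (2 ^ 2 ^ k) (2 ^ 2 ^ (k + 1)), ∑ j ∈ G n, b j ^ 2)) := by
    intro k
    have hpos : 0 < 2 ^ k := by positivity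
    have hr : 2 ^ (k + 1) - 1 + 1 = 2 ^ (k + 1) := Nat.sub_add_cancel (by rw [pow_succ]; omega)
    have hcard : (Finset.Icc (2 ^ 2 ^ k) (2 ^ 2 ^ (k + 1))).card ≤ 2 ^ (2 ^ (k + 1) - 1 + 1) := by
      have : 1 ≤ 2 ^ 2 ^ k := Nat.one_le_two_pow
      have := hmono k
      rw [Nat.card_Icc, hr]
      omega
    have key := hmax (2 ^ (k + 1) - 1) (by rw [pow_succ]; omega) _ hcard (T k) (hT2 k)
      (fun N => (Finset.Ico (2 ^ 2 ^ k) N).biUnion G)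
      (fun N hN => Finset.biUnion_subset_biUnion_of_subset_left _
        (Finset.Ico_subset_Ico_right (Finset.mem_Icc.1 hN).2)) b
    have hr' : ((2 ^ (k + 1) - 1 : ℕ) : ℝ) + 1 = 2 ^ (k + 1) := by exact_mod_cast hr
    rw [hr', hTsum, mul_assoc] at key
    refine le_trans (le_of_eq ?_) key
    refine lintegral_congr fun x => iSup_congr fun N => iSup_congr fun hN => ?_
    rw [hsub (Finset.mem_Icc.1 hN).1]
  have hDint : ∀ k, ∫⁻ x in Ico (0 : ℝ) 1,
      ENNReal.ofReal (2 ^ k * (S x (2 ^ 2 ^ (k + 1)) - S x (2 ^ 2 ^ k)) ^ 2) ≤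
      ENNReal.ofReal (C * (2 ^ (k + 1) *
        ∑ n ∈ Finset.Ico (2 ^ 2 ^ k) (2 ^ 2 ^ (k + 1)), ∑ j ∈ G n, b j ^ 2)) := by
    intro k
    have key := hmax 1 le_rfl {0} (by simp) (T k) (hT2 k) (fun _ => T k) (fun _ _ => subset_rfl) b
    simp only [Finset.mem_singleton, iSup_iSup_eq_left] at key
    simp only [hsub (hmono k)]
    calc _ = ENNReal.ofReal (2 ^ k) *
          ∫⁻ x in Ico (0 : ℝ) 1, ENNReal.ofReal ((∑ j ∈ T k, b j * φ j x) ^ 2) := by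
          rw [← lintegral_const_mul _ (by fun_prop)]
          refine lintegral_congr fun x => ?_
          rw [ENNReal.ofReal_mul (by positivity)]
      _ ≤ _ := mul_le_mul_right key _
      _ = _ := by
          rw [← ENNReal.ofReal_mul (by positivity), hTsum]
          congr 1
          push_cast
          ring
  filter_upwards [ae_tsum_ne_top_of_lintegral_le hMm hβ hMint,
    ae_tsum_ne_top_of_lintegral_le (fun k => by fun_prop) hβ hDint] with x hx1 hx2
  refine exists_tendsto_of_lacunary ?_ (ENNReal.tendsto_atTop_zero_of_tsum_ne_top hx1)
    fun k N hN => le_iSup₂ (f := fun N _ => ENNReal.ofReal ((S x N - S x (2 ^ 2 ^ k)) ^ 2)) N hN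
  refine (ENNReal.summable_toReal hx2).congr fun k => ?_
  rw [ENNReal.toReal_ofReal (by positivity)]

theorem IsWaveletSystem.integral_sum_sq {δ α c : ℝ} (hα : 0 < α) {φ : ℕ → ℝ → ℝ}
    (h : IsWaveletSystem δ α c φ) {T : Finset ℕ} (hT : ∀ j ∈ T, 2 ≤ j) (b : ℕ → ℝ) :
    ∫ x in Ioo (0 : ℝ) 1, (∑ j ∈ T, b j * φ j x) ^ 2 = ∑ j ∈ T, b j ^ 2 := by
  obtain ⟨-, horth, -, -, hholder⟩ := h
  have hint : ∀ i ∈ T, ∀ j ∈ T,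
      IntegrableOn (fun x => b i * b j * (φ i x * φ j x)) (Ioo (0 : ℝ) 1) := fun i hi j hj =>
    ((continuousOn_const.mul ((hholder.continuousOn hα (hT i hi)).mul
      (hholder.continuousOn hα (hT j hj)))).integrableOn_Icc).mono_set Ioo_subset_Icc_self
  have hexp : ∀ x, (∑ j ∈ T, b j * φ j x) ^ 2 =
      ∑ i ∈ T, ∑ j ∈ T, b i * b j * (φ i x * φ j x) := fun x => by
    rw [sq, Finset.sum_mul_sum]
    exact Finset.sum_congr rfl fun i _ => Finset.sum_congr rfl fun j _ => by ring
  simp only [hexp]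
  rw [integral_finsetSum _ fun i hi => integrable_finsetSum _ fun j hj => hint i hi j hj]
  refine Finset.sum_congr rfl fun i hi => ?_
  rw [integral_finsetSum _ fun j hj => hint i hi j hj]
  calc _ = ∑ j ∈ T, if i = j then b i * b j else 0 := by
        refine Finset.sum_congr rfl fun j hj => ?_
        have := hT i hi
        have := hT j hj
        rw [integral_const_mul, horth i j (by omega) (by omega), mul_ite, mul_one, mul_zero]
    _ = b i ^ 2 := by rw [Finset.sum_ite_eq, if_pos hi, sq]

theorem exists_index_of_pairwise_disjoint {G : ℕ → Finset ℕ}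
    (hG : ∀ i j : ℕ, i ≠ j → Disjoint (G i) (G j)) :
    ∃ idx : ℕ → ℕ, ∀ n, ∀ j ∈ G n, idx j = n := by
  have hex : ∀ j, ∃ m, ∀ n, j ∈ G n → m = n := fun j => by
    by_cases hj : ∃ m, j ∈ G m
    · obtain ⟨m, hm⟩ := hj
      exact ⟨m, fun n hn => by_contra fun hne => Finset.disjoint_left.1 (hG m n hne) hm hn⟩
    · exact ⟨0, fun n hn => absurd ⟨n, hn⟩ hj⟩
  choose idx hidx using hex
  exact ⟨idx, fun n j hj => hidx j n hj⟩

/-- `log n` is an a.e. convergence Weyl multiplier for non-overlapping wavelet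
polynomials. -/
theorem stmt18 (δ α c : ℝ) (hδ0 : 0 < δ) (hδ1 : δ < 1) (hα0 : 0 < α) (hα1 : α ≤ 1)
    (hc : 0 < c) (φ : ℕ → ℝ → ℝ) (hφ : IsWaveletSystem δ α c φ)
    (G : ℕ → Finset ℕ)
    (hG : ∀ i j : ℕ, i ≠ j → Disjoint (G i) (G j))
    (cf : ℕ → ℝ) (p : ℕ → ℝ → ℝ)
    (hp : ∀ n : ℕ, p n = fun x => ∑ j ∈ G n, cf j * φ j x)
    (hnorm : ∀ n : ℕ, 1 ≤ n → (∫ x in Set.Ioo (0:ℝ) 1, (p n x) ^ 2) = 1)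
    (a : ℕ → ℝ) (ha : Summable fun n : ℕ => a n ^ 2 * Real.log (n + 1)) :
    ∀ᵐ x ∂(volume.restrict (Set.Icc (0:ℝ) 1)),
      ∃ L : ℝ, Filter.Tendsto (fun N => ∑ n ∈ Finset.Icc 1 N, a n * p n x)
        Filter.atTop (nhds L) := by
  obtain ⟨idx, hidx⟩ := exists_index_of_pairwise_disjoint hG
  set n₀ := max (idx 0) (idx 1) with hn₀
  set G' : ℕ → Finset ℕ := fun n => if n ≤ n₀ then ∅ else G n with hG'
  have hG'sub : ∀ n, G' n ⊆ G n := fun n => by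
    simp only [hG']; split_ifs <;> simp
  have hG'0 : ∀ n ≤ n₀, G' n = ∅ := fun n hn => if_pos hn
  have hG'1 : ∀ n, n₀ < n → G' n = G n := fun n hn => if_neg hn.not_ge
  have hG2 : ∀ n, n₀ < n → ∀ j ∈ G n, 2 ≤ j := fun n hn j hj => by
    have hne := hidx n j hj
    by_contra hlt
    have : j = 0 ∨ j = 1 := by omega
    rcases this with rfl | rfl <;> omega
  have hsq : ∀ n, n₀ < n → ∑ j ∈ G n, (a (idx j) * cf j) ^ 2 = a n ^ 2 := fun n hn => by
    have hone := hnorm n (by omega)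
    simp only [hp] at hone
    rw [hφ.integral_sum_sq hα0 (hG2 n hn)] at hone
    calc _ = ∑ j ∈ G n, a n ^ 2 * cf j ^ 2 :=
          Finset.sum_congr rfl fun j hj => by rw [hidx n j hj, mul_pow]
      _ = a n ^ 2 := by rw [← Finset.mul_sum, hone, mul_one]
  have hlog0 : ∀ n : ℕ, 0 ≤ Real.log ((n : ℝ) + 1) := fun n =>
    Real.log_nonneg (by linarith [Nat.cast_nonneg (α := ℝ) n])
  have hsum : Summable fun n : ℕ =>
      (∑ j ∈ G' n, (a (idx j) * cf j) ^ 2) * Real.log (n + 1) := by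
    refine Summable.of_nonneg_of_le (fun n => mul_nonneg
      (Finset.sum_nonneg fun j _ => sq_nonneg _) (hlog0 n)) (fun n => ?_) ha
    refine mul_le_mul_of_nonneg_right ?_ (hlog0 n)
    rcases le_or_gt n n₀ with hn | hn
    · rw [hG'0 n hn, Finset.sum_empty]; positivity
    · rw [hG'1 n hn, hsq n hn]
  have hconv := hφ.ae_exists_tendsto hδ0 hδ1 hα0 hc.le (G := G')
    (fun i j hij => Finset.disjoint_of_subset_left (hG'sub i)
      (Finset.disjoint_of_subset_right (hG'sub j) (hG i j hij)))
    (fun n j hj => by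
      rcases le_or_gt n n₀ with hn | hn
      · simp [hG'0 n hn] at hj
      · exact hG2 n hn j (hG'sub n hj)) hsum
  rw [Measure.restrict_congr_set Ico_ae_eq_Icc] at hconv
  filter_upwards [hconv] with x hx
  obtain ⟨L, hL⟩ := hx
  set u : ℕ → ℝ := fun n => a n * p n x - ∑ j ∈ G' n, a (idx j) * cf j * φ j x with hu
  have hu0 : ∀ n ≥ n₀ + 1, u n = 0 := fun n hn => by
    rw [hu]
    simp only [hp, hG'1 n hn, Finset.mul_sum]
    rw [sub_eq_zero]
    exact Finset.sum_congr rfl fun j hj => by rw [hidx n j hj, mul_assoc]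
  refine ⟨L + (∑ n ∈ Finset.range (n₀ + 1), u n - a 0 * p 0 x), ?_⟩
  refine ((hL.comp (Filter.tendsto_add_atTop_nat 1)).add_const _).congr' ?_
  filter_upwards [Filter.eventually_ge_atTop n₀] with N hN
  have hIcc : ∑ n ∈ Finset.Icc 1 N, a n * p n x =
      ∑ n ∈ Finset.range (N + 1), a n * p n x - a 0 * p 0 x := by
    rw [Finset.range_eq_Ico, Finset.sum_eq_sum_Ico_succ_bot (Nat.succ_pos N), add_sub_cancel_left]
    rfl
  rw [hIcc, ← Finset.eventually_constant_sum hu0 (Nat.add_le_add_right hN 1)]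
  simp only [hu, Function.comp_apply, Finset.sum_sub_distrib]
  ring
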